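/- arXiv:1109.5250 — 3 statements merged into one kernel-verified Lean document; each statement's English description precedes it below -/
import Mathlib

section
/- Let s > 1, q ∈ [1,∞], let ω be an s-admissible weight on ℝ^d, and let f ∈ L¹(ℝ^d) have compact support. Then (∫_{ℝ^d} (|f̂(ξ)|·ω(ξ))^q dξ)^{1/q} < ∞ (essential supremum when q = ∞) if and only if WF_{FL^q_ω}(f) = ∅. -/
open MeasureTheory Complex Set
open scoped ENNReal RealInnerProductSpace NNReal

noncomputable section

namespace Paper

variable {d : ℕ}

/-- The Fourier transform, normalized by `(2π)^{-d/2}`. -/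
def FT (f : EuclideanSpace ℝ (Fin d) → ℂ) (ξ : EuclideanSpace ℝ (Fin d)) : ℂ :=
  ((2 * Real.pi) ^ (-(d : ℝ) / 2) : ℝ) *
    ∫ x, f x * Complex.exp (-(⟪x, ξ⟫ : ℝ) * Complex.I)

/-- The short-time Fourier transform `V_φ f (x, ξ)`. -/
def STFT (φ f : EuclideanSpace ℝ (Fin d) → ℂ) (x ξ : EuclideanSpace ℝ (Fin d)) : ℂ :=
  ((2 * Real.pi) ^ (-(d : ℝ) / 2) : ℝ) *
    ∫ y, f y * (starRingEnd ℂ) (φ (y - x)) * Complex.exp (-(⟪ξ, y⟫ : ℝ) * Complex.I)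

/-- A cone in `ℝ^d ∖ {0}`. -/
def IsCone (Γ : Set (EuclideanSpace ℝ (Fin d))) : Prop :=
  (0 : EuclideanSpace ℝ (Fin d)) ∉ Γ ∧ ∀ ξ ∈ Γ, ∀ t : ℝ, 0 < t → t • ξ ∈ Γ

/-- An `s`-cutoff: smooth, compactly supported, with Fourier transform decaying faster
than every `exp (-N |ξ|^{1/s})`. -/
def IsSCutoff (s : ℝ) (φ : EuclideanSpace ℝ (Fin d) → ℂ) : Prop :=
  ContDiff ℝ (⊤ : ℕ∞) φ ∧ HasCompactSupport φ ∧
    ∀ N : ℝ, 0 < N → ∃ C : ℝ, 0 < C ∧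
      ∀ ξ, ‖FT φ ξ‖ ≤ C * Real.exp (-N * ‖ξ‖ ^ (1 / s))

/-- An `s`-admissible weight: positive, measurable, and moderate with respect to an even
submultiplicative weight of sub-exponential growth of order `1/s`. -/
def IsSAdmissible (s : ℝ) (ω : EuclideanSpace ℝ (Fin d) → ℝ) : Prop :=
  Measurable ω ∧ (∀ x, 0 < ω x) ∧
    ∃ v : EuclideanSpace ℝ (Fin d) → ℝ, Measurable v ∧ (∀ x, 0 < v x) ∧
      (∀ x, v (-x) = v x) ∧ (∀ x y, v (x + y) ≤ v x * v y) ∧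
      ∃ C₀ k₀ C₁ : ℝ, 0 < C₀ ∧ 0 < k₀ ∧ 0 < C₁ ∧
        (∀ ξ, v ξ ≤ C₀ * Real.exp (k₀ * ‖ξ‖ ^ (1 / s))) ∧
        ∀ x y, ω (x + y) ≤ C₁ * v x * ω y

/-- The Fourier–Lebesgue seminorm `( ∫_Γ (|f̂| ω)^q )^{1/q}` (ess-sup when `q = ∞`). -/
def FLSemi (ω : EuclideanSpace ℝ (Fin d) → ℝ) (q : ℝ≥0∞)
    (f : EuclideanSpace ℝ (Fin d) → ℂ) (Γ : Set (EuclideanSpace ℝ (Fin d))) : ℝ≥0∞ :=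
  eLpNorm (fun ξ => ‖FT f ξ‖ * ω ξ) q (volume.restrict Γ)

/-- The Fourier–Lebesgue wave-front set `WF_{FL^q_ω} f`. -/
def WF_FL (s : ℝ) (q : ℝ≥0∞) (ω : EuclideanSpace ℝ (Fin d) → ℝ)
    (f : EuclideanSpace ℝ (Fin d) → ℂ) :
    Set (EuclideanSpace ℝ (Fin d) × EuclideanSpace ℝ (Fin d)) :=
  {z | z.2 ≠ 0 ∧ ∀ φ : EuclideanSpace ℝ (Fin d) → ℂ, IsSCutoff s φ → φ z.1 ≠ 0 →
    ∀ Γ : Set (EuclideanSpace ℝ (Fin d)), IsOpen Γ → IsCone Γ → z.2 ∈ Γ →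
      FLSemi ω q (fun x => φ x * f x) Γ = ∞}

/-- The `s`-wave-front set `WF_s f`. -/
def WFs (s : ℝ) (f : EuclideanSpace ℝ (Fin d) → ℂ) :
    Set (EuclideanSpace ℝ (Fin d) × EuclideanSpace ℝ (Fin d)) :=
  {z | z.2 ≠ 0 ∧ ¬ ∃ φ : EuclideanSpace ℝ (Fin d) → ℂ, IsSCutoff s φ ∧
    (∃ U : Set (EuclideanSpace ℝ (Fin d)), IsOpen U ∧ z.1 ∈ U ∧ ∀ x ∈ U, φ x = 1) ∧
    ∃ Γ : Set (EuclideanSpace ℝ (Fin d)), IsOpen Γ ∧ IsCone Γ ∧ z.2 ∈ Γ ∧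
      ∃ C k : ℝ, 0 < C ∧ 0 < k ∧
        ∀ ξ ∈ Γ, ‖FT (fun x => φ x * f x) ξ‖ ≤ C * Real.exp (-k * ‖ξ‖ ^ (1 / s))}

/-- The mixed modulation-space seminorm
`( ∫_Γ ( ∫ |V_g F(x,ξ)|^p dx )^{q/p} ω(ξ)^q dξ )^{1/q}` with the usual
ess-sup interpretations for `p = ∞` or `q = ∞`. -/
def ModSemi (g F : EuclideanSpace ℝ (Fin d) → ℂ) (ω : EuclideanSpace ℝ (Fin d) → ℝ)
    (p q : ℝ≥0∞) (Γ : Set (EuclideanSpace ℝ (Fin d))) : ℝ≥0∞ :=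
  if q = ∞ then
    essSup (fun ξ => eLpNorm (fun x => STFT g F x ξ) p volume * ENNReal.ofReal (ω ξ))
      (volume.restrict Γ)
  else
    (∫⁻ ξ in Γ, (eLpNorm (fun x => STFT g F x ξ) p volume * ENNReal.ofReal (ω ξ)) ^ q.toReal) ^
      (1 / q.toReal)

/-- The modulation wave-front set `WF_{M^{p,q}_ω} f`, with window `g`. -/
def WF_M (s : ℝ) (p q : ℝ≥0∞) (ω : EuclideanSpace ℝ (Fin d) → ℝ)
    (g f : EuclideanSpace ℝ (Fin d) → ℂ) :
    Set (EuclideanSpace ℝ (Fin d) × EuclideanSpace ℝ (Fin d)) :=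
  {z | z.2 ≠ 0 ∧ ∀ φ : EuclideanSpace ℝ (Fin d) → ℂ, IsSCutoff s φ → φ z.1 ≠ 0 →
    ∀ Γ : Set (EuclideanSpace ℝ (Fin d)), IsOpen Γ → IsCone Γ → z.2 ∈ Γ →
      ModSemi g (fun x => φ x * f x) ω p q Γ = ∞}

/-- Reinterpret a plain vector as a point of Euclidean space. -/
def toE (x : Fin d → ℝ) : EuclideanSpace ℝ (Fin d) :=
  (EuclideanSpace.equiv (Fin d) ℝ).symm x

/-- The point `A k` of the lattice `A(ℤ^d)`. -/
def latPt (A : Matrix (Fin d) (Fin d) ℝ) (k : Fin d → ℤ) : EuclideanSpace ℝ (Fin d) :=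
  toE (A.mulVec fun i => (k i : ℝ))

/-- The point `c (Aᵀ)⁻¹ k` of the dual lattice `c (Aᵀ)⁻¹(ℤ^d)`. -/
def dualLatPt (A : Matrix (Fin d) (Fin d) ℝ) (c : ℝ) (k : Fin d → ℤ) :
    EuclideanSpace ℝ (Fin d) :=
  toE (c • (A.transpose⁻¹.mulVec fun i => (k i : ℝ)))

/-- The parallelepiped `x₁ + A([0,1]^d)`. -/
def lattPara (A : Matrix (Fin d) (Fin d) ℝ) (x₁ : EuclideanSpace ℝ (Fin d)) :
    Set (EuclideanSpace ℝ (Fin d)) :=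
  (fun t : Fin d → ℝ => x₁ + toE (A.mulVec t)) '' (Set.univ.pi fun _ => Set.Icc 0 1)

/-- The adjoint short-time Fourier transform `V*_φ F`. -/
def VStar (φ : EuclideanSpace ℝ (Fin d) → ℂ)
    (F : EuclideanSpace ℝ (Fin d) × EuclideanSpace ℝ (Fin d) → ℂ)
    (t : EuclideanSpace ℝ (Fin d)) : ℂ :=
  ((2 * Real.pi) ^ (-(d : ℝ) / 2) : ℝ) *
    ∫ z : EuclideanSpace ℝ (Fin d) × EuclideanSpace ℝ (Fin d),
      F z * Complex.exp ((⟪z.2, t⟫ : ℝ) * Complex.I) * φ (t - z.1)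


/-- Shorthand for the Euclidean space. -/
abbrev Ed (d : ℕ) := EuclideanSpace ℝ (Fin d)

open Filter Topology

/-- Shifted power, a concave function vanishing at zero. -/
def rho (p R t : ℝ) : ℝ := (R + t) ^ p - R ^ p

theorem rho_nonneg {p R t : ℝ} (hp0 : 0 < p) (hR : 0 ≤ R) (ht : 0 ≤ t) : 0 ≤ rho p R t := by
  unfold rho
  have := Real.rpow_le_rpow hR (by linarith : R ≤ R + t) hp0.le
  linarith

theorem rho_le_add {p R a b c : ℝ} (hp0 : 0 < p) (hp1 : p < 1) (hR : 0 ≤ R) (ha : 0 ≤ a)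
    (hb : 0 ≤ b) (hc : 0 ≤ c) (h : c ≤ a + b) : rho p R c ≤ rho p R a + rho p R b := by
  have key : (R + (a + b)) ^ p + R ^ p ≤ (R + a) ^ p + (R + b) ^ p := by
    rcases eq_or_lt_of_le (add_nonneg ha hb) with h0 | h0
    · have ha' : a = 0 := by linarith
      have hb' : b = 0 := by linarith
      simp [ha', hb']
    · have hcv := Real.concaveOn_rpow hp0.le hp1.le
      have hx : R ∈ Ici (0 : ℝ) := hR
      have hy : R + (a + b) ∈ Ici (0 : ℝ) := by simp only [mem_Ici]; linarith
      have hcv2 := hcv.2 hx hy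
      have h1 := hcv2 (by positivity : 0 ≤ b / (a + b)) (by positivity : 0 ≤ a / (a + b))
        (by field_simp; ring)
      have h2 := hcv2 (by positivity : 0 ≤ a / (a + b)) (by positivity : 0 ≤ b / (a + b))
        (by field_simp)
      simp only [smul_eq_mul] at h1 h2
      have e1 : b / (a + b) * R + a / (a + b) * (R + (a + b)) = R + a := by
        field_simp; ring
      have e2 : a / (a + b) * R + b / (a + b) * (R + (a + b)) = R + b := by
        field_simp; ring
      rw [e1] at h1
      rw [e2] at h2
      have e3 : b / (a + b) + a / (a + b) = 1 := by field_simp; ring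
      have e4 : b / (a + b) * R ^ p + a / (a + b) * (R + (a + b)) ^ p
        + (a / (a + b) * R ^ p + b / (a + b) * (R + (a + b)) ^ p) =
        (b / (a + b) + a / (a + b)) * (R ^ p + (R + (a + b)) ^ p) := by ring
      rw [e3, one_mul] at e4
      linarith
  have : (R + c) ^ p ≤ (R + (a + b)) ^ p :=
    Real.rpow_le_rpow (by linarith) (by linarith) hp0.le
  unfold rho
  linarith

theorem rho_zero {p t : ℝ} (hp0 : 0 < p) : rho p 0 t = t ^ p := by
  simp [rho, Real.zero_rpow hp0.ne']

theorem rpow_le_rho_add {p R t : ℝ} (hp0 : 0 < p) (hR : 0 ≤ R) (ht : 0 ≤ t) :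
    t ^ p ≤ rho p R t + R ^ p := by
  unfold rho
  have := Real.rpow_le_rpow ht (by linarith : t ≤ R + t) hp0.le
  linarith

theorem rho_le_rpow {p R t : ℝ} (hp0 : 0 < p) (hp1 : p < 1) (hR : 0 ≤ R) (ht : 0 ≤ t) :
    rho p R t ≤ t ^ p := by
  have := rho_le_add (R := 0) hp0 hp1 le_rfl hR ht (add_nonneg hR ht) le_rfl
  simp only [rho_zero hp0] at this
  unfold rho
  linarith

theorem rpow_le_add {p a b c : ℝ} (hp0 : 0 < p) (hp1 : p < 1) (ha : 0 ≤ a)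
    (hb : 0 ≤ b) (hc : 0 ≤ c) (h : c ≤ a + b) : c ^ p ≤ a ^ p + b ^ p := by
  have := rho_le_add (R := 0) hp0 hp1 le_rfl ha hb hc h
  simpa only [rho_zero hp0] using this

theorem tendsto_rho {p t : ℝ} (hp0 : 0 < p) (hp1 : p < 1) (ht : 0 ≤ t) :
    Tendsto (fun R => rho p R t) atTop (𝓝 0) := by
  have h1 : Tendsto (fun R : ℝ => p * t * R ^ (-(1 - p))) atTop (𝓝 0) := by
    have := (tendsto_rpow_neg_atTop (y := 1 - p) (by linarith)).const_mul (p * t)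
    simpa using this
  refine squeeze_zero' ?_ ?_ h1
  · filter_upwards [eventually_ge_atTop 0] with R hR using rho_nonneg hp0 hR ht
  · filter_upwards [eventually_gt_atTop 0] with R hR
    have htR : 0 ≤ t / R := by positivity
    have hb : (1 + t / R) ^ p ≤ 1 + p * (t / R) :=
      rpow_one_add_le_one_add_mul_self (by linarith) hp0.le hp1.le
    have e : R + t = R * (1 + t / R) := by field_simp
    unfold rho
    rw [e, Real.mul_rpow hR.le (by positivity)]
    have e2 : R ^ (-(1 - p)) = R ^ p / R := by
      rw [show -(1 - p) = p - 1 by ring, Real.rpow_sub hR, Real.rpow_one]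
    rw [e2]
    have h0 : 0 ≤ R ^ p := by positivity
    calc R ^ p * (1 + t / R) ^ p - R ^ p ≤ R ^ p * (1 + p * (t / R)) - R ^ p := by gcongr
      _ = p * t * (R ^ p / R) := by field_simp; ring

/-- Decay of stretched exponentials against polynomials. -/
theorem exp_neg_rpow_le {p k : ℝ} (hp0 : 0 < p) (hk : 0 < k) (r : ℝ) :
    ∃ C : ℝ, 0 < C ∧ ∀ t : ℝ, 0 ≤ t → Real.exp (-k * t ^ p) ≤ C * (1 + t) ^ (-r) := by
  have hcont : ContinuousOn (fun t : ℝ => Real.exp (-k * t ^ p) * (1 + t) ^ r) (Ici 0) := by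
    intro t ht
    apply ContinuousAt.continuousWithinAt
    have ht' : (0:ℝ) ≤ t := ht
    apply ContinuousAt.mul
    · apply Real.continuous_exp.continuousAt.comp
      exact continuousAt_const.mul (Real.continuousAt_rpow_const _ _ (Or.inr hp0.le))
    · exact ContinuousAt.rpow_const (by fun_prop) (Or.inl (by linarith))
  have hlim : Tendsto (fun t : ℝ => Real.exp (-k * t ^ p) * (1 + t) ^ r) atTop (𝓝 0) := by
    have h1 : Tendsto (fun t : ℝ => t ^ (|r| / p) * Real.exp (-k * t)) atTop (𝓝 0) :=
      tendsto_rpow_mul_exp_neg_mul_atTop_nhds_zero _ _ hk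
    have h2 := (h1.comp (tendsto_rpow_atTop hp0)).const_mul ((2:ℝ) ^ |r|)
    simp only [mul_zero] at h2
    refine squeeze_zero' ?_ ?_ h2
    · filter_upwards [eventually_ge_atTop 0] with t ht
      positivity
    · filter_upwards [eventually_ge_atTop 1] with t ht
      have ht0 : (0:ℝ) ≤ t := by linarith
      have : (1 + t) ^ r ≤ 2 ^ |r| * t ^ |r| := by
        rw [← Real.mul_rpow (by norm_num) ht0]
        calc (1 + t) ^ r ≤ (1 + t) ^ |r| := Real.rpow_le_rpow_of_exponent_le (by linarith) (le_abs_self r)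
          _ ≤ _ := Real.rpow_le_rpow (by linarith) (by linarith) (abs_nonneg r)
      simp only [Function.comp]
      rw [← Real.rpow_mul ht0, mul_div_cancel₀ _ hp0.ne']
      calc Real.exp (-k * t ^ p) * (1 + t) ^ r ≤ Real.exp (-k * t ^ p) * (2 ^ |r| * t ^ |r|) := by gcongr
        _ = _ := by ring
  obtain ⟨T, hT⟩ := (eventually_atTop.1 (hlim.eventually (gt_mem_nhds (zero_lt_one))))
  obtain ⟨B, hB⟩ := (isCompact_Icc (a := (0:ℝ)) (b := max T 0)).exists_bound_of_continuousOn
    (hcont.mono (fun x hx => hx.1))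
  refine ⟨max B 1, by positivity, fun t ht => ?_⟩
  have hpos : 0 < (1 + t) ^ r := by positivity
  have hmain : Real.exp (-k * t ^ p) * (1 + t) ^ r ≤ max B 1 := by
    by_cases h : t ≤ max T 0
    · exact (le_trans (le_abs_self _) (hB t ⟨ht, h⟩)).trans (le_max_left _ _)
    · have : T ≤ t := (le_max_left T 0).trans (not_le.1 h).le
      exact (hT t this).le.trans (le_max_right _ _)
  rw [Real.rpow_neg (by positivity), ← div_eq_mul_inv, le_div_iff₀ hpos]
  exact hmain

theorem continuous_norm_rpow {p : ℝ} (hp0 : 0 < p) : Continuous (fun x : Ed d => ‖x‖ ^ p) :=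
  continuous_norm.rpow_const (fun _ => Or.inr hp0.le)

theorem integrable_exp_neg {p k : ℝ} (hp0 : 0 < p) (hk : 0 < k) :
    Integrable (fun x : Ed d => Real.exp (-k * ‖x‖ ^ p)) := by
  obtain ⟨C, hC, h⟩ := exp_neg_rpow_le hp0 hk (d + 1)
  have hi : Integrable (fun x : Ed d => (1 + ‖x‖) ^ (-((d:ℝ) + 1))) :=
    integrable_one_add_norm (by simp)
  refine (hi.const_mul C).mono' ?_ ?_
  · exact (Real.continuous_exp.comp (continuous_const.mul (continuous_norm_rpow hp0))).aestronglyMeasurable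
  · refine Eventually.of_forall fun x => ?_
    rw [Real.norm_eq_abs, abs_of_pos (Real.exp_pos _)]
    exact h _ (norm_nonneg _)

theorem memLp_exp_neg {p k : ℝ} (hp0 : 0 < p) (hk : 0 < k) (q : ℝ≥0∞) (hq : 1 ≤ q) :
    MemLp (fun x : Ed d => Real.exp (-k * ‖x‖ ^ p)) q volume := by
  have hc : Continuous (fun x : Ed d => Real.exp (-k * ‖x‖ ^ p)) :=
    (Real.continuous_exp.comp (continuous_const.mul (continuous_norm_rpow hp0)))
  by_cases hq' : q = ∞
  · subst hq'
    refine memLp_top_of_bound hc.aestronglyMeasurable 1 (Eventually.of_forall fun x => ?_)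
    rw [Real.norm_eq_abs, abs_of_pos (Real.exp_pos _)]
    apply Real.exp_le_one_iff.2
    have : 0 ≤ ‖x‖ ^ p := by positivity
    nlinarith
  · have hq0 : q ≠ 0 := by positivity
    rw [← integrable_norm_rpow_iff hc.aestronglyMeasurable hq0 hq']
    have hqr : 0 < q.toReal := ENNReal.toReal_pos hq0 hq'
    have := integrable_exp_neg (d := d) hp0 (mul_pos hk hqr)
    refine this.congr (Eventually.of_forall fun x => ?_)
    simp only [Real.norm_eq_abs, abs_of_pos (Real.exp_pos _)]
    rw [← Real.exp_mul]
    congr 1; ring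


open scoped FourierTransform

/-- The normalization constant. -/
def cst (d : ℕ) : ℝ := (2 * Real.pi) ^ (-(d : ℝ) / 2)

theorem cst_pos (d : ℕ) : 0 < cst d := by unfold cst; positivity

/-- Oscillating exponential. -/
def osc (x ξ : Ed d) : ℂ := Complex.exp (-(⟪x, ξ⟫ : ℝ) * Complex.I)

theorem norm_osc (x ξ : Ed d) : ‖osc x ξ‖ = 1 := by
  unfold osc
  rw [← Complex.ofReal_neg, Complex.norm_exp_ofReal_mul_I]

theorem continuous_osc : Continuous (fun z : Ed d × Ed d => osc z.1 z.2) := by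
  unfold osc; fun_prop

theorem osc_add_right (x ξ η : Ed d) : osc x (ξ + η) = osc x ξ * osc x η := by
  unfold osc
  rw [← Complex.exp_add, inner_add_right]
  congr 1; push_cast; ring

theorem osc_neg_mul (x ξ : Ed d) : osc x (-ξ) * osc x ξ = 1 := by
  rw [← osc_add_right]; simp [osc]

theorem osc_add_left (x y ξ : Ed d) : osc (x + y) ξ = osc x ξ * osc y ξ := by
  unfold osc
  rw [← Complex.exp_add, inner_add_left]
  congr 1; push_cast; ring

theorem FT_def (f : Ed d → ℂ) (ξ : Ed d) : FT f ξ = cst d * ∫ x, f x * osc x ξ := rfl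

theorem FT_eq_fourier (f : Ed d → ℂ) (ξ : Ed d) :
    FT f ξ = cst d * 𝓕 f ((2 * Real.pi)⁻¹ • ξ) := by
  rw [FT_def, Real.fourier_eq']
  congr 1
  apply integral_congr_ae (Eventually.of_forall fun x => ?_)
  simp only [smul_eq_mul]
  rw [mul_comm]
  congr 1
  unfold osc
  congr 1
  rw [inner_smul_right]
  have := Real.pi_pos
  have e : -2 * Real.pi * ((2 * Real.pi)⁻¹ * ⟪x, ξ⟫) = -⟪x, ξ⟫ := by field_simp
  rw [e]; push_cast; ring

theorem continuous_FT {f : Ed d → ℂ} (hf : Integrable f) : Continuous (FT f) := by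
  have : FT f = fun ξ => (cst d : ℂ) * 𝓕 f ((2 * Real.pi)⁻¹ • ξ) := by
    ext ξ; exact FT_eq_fourier f ξ
  rw [this]
  have hc : Continuous (𝓕 f) := VectorFourier.fourierIntegral_continuous Real.continuous_fourierChar
    (by exact continuous_inner) hf
  exact continuous_const.mul (hc.comp (by fun_prop))

theorem norm_FT_le (f : Ed d → ℂ) (ξ : Ed d) : ‖FT f ξ‖ ≤ cst d * ∫ x, ‖f x‖ := by
  rw [FT_def, norm_mul, Complex.norm_real, Real.norm_eq_abs, abs_of_pos (cst_pos d)]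
  gcongr
  · exact (cst_pos d).le
  · refine (norm_integral_le_integral_norm _).trans (le_of_eq ?_)
    congr 1; ext x; rw [norm_mul, norm_osc, mul_one]

theorem integrable_mul_osc {f : Ed d → ℂ} (hf : Integrable f) (ξ : Ed d) :
    Integrable (fun x => f x * osc x ξ) := by
  refine hf.mono ?_ (Eventually.of_forall fun x => ?_)
  · exact hf.1.mul (continuous_osc.comp (by fun_prop : Continuous fun x : Ed d => (x, ξ))).aestronglyMeasurable
  · rw [norm_mul, norm_osc, mul_one]

theorem FT_add {f g : Ed d → ℂ} (hf : Integrable f) (hg : Integrable g) (ξ : Ed d) :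
    FT (fun x => f x + g x) ξ = FT f ξ + FT g ξ := by
  simp only [FT_def]
  rw [← mul_add, ← integral_add (integrable_mul_osc hf ξ) (integrable_mul_osc hg ξ)]
  congr 2; ext x; ring

theorem FT_const_mul (a : ℂ) (f : Ed d → ℂ) (ξ : Ed d) :
    FT (fun x => a * f x) ξ = a * FT f ξ := by
  simp only [FT_def]
  simp_rw [mul_assoc]
  rw [integral_const_mul]
  ring

theorem integrable_cut {s : ℝ} {φ : Ed d → ℂ} (h : IsSCutoff s φ) : Integrable φ :=
  h.1.continuous.integrable_of_hasCompactSupport h.2.1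

theorem integrable_FT_exp {s : ℝ} (hs : 1 < s) {φ : Ed d → ℂ} (h : IsSCutoff s φ) (k : ℝ) :
    Integrable (fun ξ => ‖FT φ ξ‖ * Real.exp (k * ‖ξ‖ ^ (1 / s))) := by
  have hp0 : 0 < 1 / s := by positivity
  obtain ⟨C, hC, hb⟩ := h.2.2 (|k| + 1) (by positivity)
  refine ((integrable_exp_neg (d := d) hp0 one_pos).const_mul C).mono' ?_ ?_
  · refine Continuous.aestronglyMeasurable ?_
    exact (continuous_FT (integrable_cut h)).norm.mul
      (Real.continuous_exp.comp (continuous_const.mul (continuous_norm_rpow hp0)))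
  · refine Eventually.of_forall fun x => ?_
    rw [Real.norm_eq_abs, abs_of_nonneg (by positivity)]
    calc ‖FT φ x‖ * Real.exp (k * ‖x‖ ^ (1 / s))
        ≤ (C * Real.exp (-(|k| + 1) * ‖x‖ ^ (1 / s))) * Real.exp (|k| * ‖x‖ ^ (1 / s)) := by
          gcongr
          · exact hb x
          · exact le_abs_self k
      _ = _ := by
          rw [mul_assoc, ← Real.exp_add]; congr 2; ring

theorem integrable_FT {s : ℝ} (hs : 1 < s) {φ : Ed d → ℂ} (h : IsSCutoff s φ) :
    Integrable (FT φ) := by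
  have := integrable_FT_exp hs h 0
  simp only [zero_mul, Real.exp_zero, mul_one] at this
  exact (integrable_norm_iff (continuous_FT (integrable_cut h)).aestronglyMeasurable).1 this

theorem inversion {φ : Ed d → ℂ} (hc : Continuous φ) (hi : Integrable φ)
    (hF : Integrable (FT φ)) (x : Ed d) :
    φ x = cst d * ∫ η, FT φ η * osc x (-η) := by
  have hpi : (0:ℝ) < 2 * Real.pi := by positivity
  have hcd := cst_pos d
  have hFe : ∀ w, 𝓕 φ w = (cst d : ℂ)⁻¹ * FT φ ((2 * Real.pi) • w) := by
    intro w
    rw [FT_eq_fourier, smul_smul, inv_mul_cancel₀ hpi.ne', one_smul, ← mul_assoc,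
      inv_mul_cancel₀ (by exact_mod_cast hcd.ne'), one_mul]
  have hF' : Integrable (𝓕 φ) := by
    have : 𝓕 φ = fun w => (cst d : ℂ)⁻¹ * FT φ ((2 * Real.pi) • w) := by ext w; exact hFe w
    rw [this]
    exact (hF.comp_smul hpi.ne').const_mul _
  have h1 := hi.fourierInv_fourier_eq hF' (v := x) hc.continuousAt
  rw [← h1, Real.fourierInv_eq']
  have h2 : ∀ v : Ed d, Complex.exp (↑(2 * Real.pi * ⟪v, x⟫) * I) • 𝓕 φ v =
      (fun η : Ed d => (cst d : ℂ)⁻¹ * (FT φ η * osc x (-η))) ((2 * Real.pi) • v) := by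
    intro v
    simp only [smul_eq_mul]
    rw [hFe, mul_comm, mul_assoc]
    congr 2
    unfold osc
    rw [inner_neg_right, inner_smul_right, real_inner_comm]
    push_cast; congr 1; ring
  rw [integral_congr_ae (Eventually.of_forall h2)]
  rw [Measure.integral_comp_smul_of_nonneg volume
    (fun η : Ed d => (cst d : ℂ)⁻¹ * (FT φ η * osc x (-η))) _ (hR := hpi.le)]
  rw [integral_const_mul]
  rw [finrank_euclideanSpace_fin, Complex.real_smul, ← mul_assoc]
  congr 1
  have e : ((2 * Real.pi) ^ d)⁻¹ = cst d * cst d := by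
    unfold cst
    rw [← Real.rpow_add hpi, ← Real.rpow_natCast, ← Real.rpow_neg hpi.le]
    congr 1; ring
  rw [e]
  push_cast
  field_simp

theorem FT_mul {φ u : Ed d → ℂ} (hc : Continuous φ) (hi : Integrable φ)
    (hF : Integrable (FT φ)) (hu : Integrable u) (ξ : Ed d) :
    FT (fun x => φ x * u x) ξ = cst d * ∫ η, FT φ η * FT u (ξ - η) := by
  rw [FT_def]
  congr 1
  have h1 : ∀ x, φ x * u x * osc x ξ = ∫ η, cst d * (FT φ η * (u x * osc x (ξ - η))) := by
    intro x
    have e : ∀ η, cst d * (FT φ η * (u x * osc x (ξ - η))) =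
        (u x * osc x ξ) * (cst d * (FT φ η * osc x (-η))) := by
      intro η; rw [sub_eq_add_neg, osc_add_right]; ring
    simp_rw [e]
    rw [integral_const_mul, integral_const_mul, ← inversion hc hi hF]
    ring
  simp_rw [h1]
  rw [integral_integral_swap]
  · apply integral_congr_ae (Eventually.of_forall fun η => ?_)
    beta_reduce
    rw [FT_def u, integral_const_mul, integral_const_mul]
    ring
  · have hp : Integrable (fun z : Ed d × Ed d => u z.1 * FT φ z.2) (volume.prod volume) :=
      hu.mul_prod hF
    have : (Function.uncurry fun (x η : Ed d) => (cst d : ℂ) * (FT φ η * (u x * osc x (ξ - η)))) =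
      fun z => (cst d : ℂ) * ((u z.1 * FT φ z.2) * osc z.1 (ξ - z.2)) := by
      ext z; simp only [Function.uncurry]; ring
    rw [this]
    refine Integrable.const_mul ?_ _
    refine hp.mono ?_ (Eventually.of_forall fun z => ?_)
    · exact hp.1.mul (continuous_osc.comp (by fun_prop :
        Continuous fun z : Ed d × Ed d => (z.1, ξ - z.2))).aestronglyMeasurable
    · rw [norm_mul, norm_osc, mul_one]



theorem cut_add {s : ℝ} {φ ψ : Ed d → ℂ} (hφ : IsSCutoff s φ) (hψ : IsSCutoff s ψ) :
    IsSCutoff s (fun x => φ x + ψ x) := by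
  refine ⟨hφ.1.add hψ.1, hφ.2.1.add hψ.2.1, fun N hN => ?_⟩
  obtain ⟨C, hC, h⟩ := hφ.2.2 N hN
  obtain ⟨D, hD, h'⟩ := hψ.2.2 N hN
  refine ⟨C + D, by positivity, fun ξ => ?_⟩
  rw [FT_add (integrable_cut hφ) (integrable_cut hψ), add_mul]
  exact (norm_add_le _ _).trans (add_le_add (h ξ) (h' ξ))

theorem cut_const_mul {s : ℝ} {φ : Ed d → ℂ} (a : ℂ) (hφ : IsSCutoff s φ) :
    IsSCutoff s (fun x => a * φ x) := by
  refine ⟨contDiff_const.mul hφ.1, hφ.2.1.mul_left, fun N hN => ?_⟩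
  obtain ⟨C, hC, h⟩ := hφ.2.2 N hN
  refine ⟨(‖a‖ + 1) * C, by positivity, fun ξ => ?_⟩
  rw [FT_const_mul, norm_mul, mul_assoc]
  gcongr
  · linarith
  · exact h ξ

theorem cut_mul {s : ℝ} (hs : 1 < s) {φ ψ : Ed d → ℂ} (hφ : IsSCutoff s φ)
    (hψ : IsSCutoff s ψ) : IsSCutoff s (fun x => φ x * ψ x) := by
  have hp0 : 0 < 1 / s := by positivity
  have hp1 : 1 / s < 1 := by rw [div_lt_one (by linarith)]; exact hs
  refine ⟨hφ.1.mul hψ.1, hφ.2.1.mul_right, fun N hN => ?_⟩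
  obtain ⟨D, hD, h'⟩ := hψ.2.2 N hN
  set J := ∫ η, ‖FT φ η‖ * Real.exp (N * ‖η‖ ^ (1 / s)) with hJ
  have hJ0 : 0 ≤ J := integral_nonneg fun η => by positivity
  have hint := integrable_FT_exp hs hφ N
  refine ⟨cst d * (D * J) + 1, by have := cst_pos d; positivity, fun ξ => ?_⟩
  rw [FT_mul hφ.1.continuous (integrable_cut hφ) (integrable_FT hs hφ) (integrable_cut hψ),
    norm_mul, Complex.norm_real, Real.norm_eq_abs, abs_of_pos (cst_pos d)]
  have hb : ‖∫ η, FT φ η * FT ψ (ξ - η)‖ ≤ D * Real.exp (-N * ‖ξ‖ ^ (1 / s)) * J := by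
    rw [hJ, ← integral_const_mul]
    refine norm_integral_le_of_norm_le (hint.const_mul _) (Eventually.of_forall fun η => ?_)
    rw [norm_mul]
    have hsub : ‖ξ‖ ^ (1 / s) ≤ ‖ξ - η‖ ^ (1 / s) + ‖η‖ ^ (1 / s) :=
      rpow_le_add hp0 hp1 (norm_nonneg _) (norm_nonneg _) (norm_nonneg _)
        (by simpa using norm_add_le (ξ - η) η)
    calc ‖FT φ η‖ * ‖FT ψ (ξ - η)‖
        ≤ ‖FT φ η‖ * (D * Real.exp (-N * ‖ξ - η‖ ^ (1 / s))) := by gcongr; exact h' _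
      _ ≤ ‖FT φ η‖ * (D * Real.exp (-N * ‖ξ‖ ^ (1 / s) + N * ‖η‖ ^ (1 / s))) := by
          gcongr; nlinarith
      _ = _ := by rw [Real.exp_add]; ring
  calc cst d * ‖∫ η, FT φ η * FT ψ (ξ - η)‖
      ≤ cst d * (D * Real.exp (-N * ‖ξ‖ ^ (1 / s)) * J) := by
        gcongr; exact (cst_pos d).le
    _ = (cst d * (D * J)) * Real.exp (-N * ‖ξ‖ ^ (1 / s)) := by ring
    _ ≤ _ := by gcongr; linarith

theorem FT_scale (χ : Ed d → ℂ) {ε : ℝ} (hε : 0 < ε) (x₀ ξ : Ed d) :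
    FT (fun x => χ (ε⁻¹ • (x - x₀))) ξ = (ε ^ d : ℝ) * osc x₀ ξ * FT χ (ε • ξ) := by
  simp only [FT_def]
  have h1 : ∫ x, χ (ε⁻¹ • (x - x₀)) * osc x ξ =
      ∫ x, (fun x => χ (ε⁻¹ • x) * osc (x + x₀) ξ) (x - x₀) := by
    simp
  rw [h1, integral_sub_right_eq_self (fun x => χ (ε⁻¹ • x) * osc (x + x₀) ξ) x₀]
  have h2 : ∀ x, χ (ε⁻¹ • x) * osc (x + x₀) ξ =
      (fun y => osc x₀ ξ * (χ y * osc y (ε • ξ))) (ε⁻¹ • x) := by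
    intro x
    have : osc (ε⁻¹ • x) (ε • ξ) = osc x ξ := by
      unfold osc
      rw [inner_smul_left, inner_smul_right]
      simp only [conj_trivial]
      rw [← mul_assoc, inv_mul_cancel₀ hε.ne', one_mul]
    simp only [this, osc_add_left]
    ring
  rw [integral_congr_ae (Eventually.of_forall h2)]
  rw [Measure.integral_comp_smul_of_nonneg volume
    (fun y : Ed d => osc x₀ ξ * (χ y * osc y (ε • ξ))) _ (hR := (inv_pos.2 hε).le)]
  rw [integral_const_mul, finrank_euclideanSpace_fin, Complex.real_smul]
  simp only [inv_pow, inv_inv]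
  ring

theorem cut_scale {s : ℝ} (hs : 1 < s) {χ : Ed d → ℂ} (hχ : IsSCutoff s χ) {ε : ℝ} (hε : 0 < ε)
    (x₀ : Ed d) : IsSCutoff s (fun x => χ (ε⁻¹ • (x - x₀))) := by
  have hp0 : 0 < 1 / s := by positivity
  refine ⟨hχ.1.comp (by fun_prop), ?_, fun N hN => ?_⟩
  · have : (fun x => χ (ε⁻¹ • (x - x₀))) = χ ∘
      ((Homeomorph.subRight x₀).trans (Homeomorph.smulOfNeZero ε⁻¹ (inv_ne_zero hε.ne'))) := by
      ext x; simp
    rw [this]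
    exact hχ.2.1.comp_homeomorph _
  · obtain ⟨C, hC, h⟩ := hχ.2.2 (N * (ε ^ (1 / s))⁻¹) (by positivity)
    refine ⟨ε ^ d * C, by positivity, fun ξ => ?_⟩
    rw [FT_scale χ hε, norm_mul, norm_mul, norm_osc, mul_one, Complex.norm_real,
      Real.norm_eq_abs, abs_of_pos (by positivity), mul_assoc]
    gcongr
    refine (h _).trans (le_of_eq ?_)
    rw [norm_smul, Real.norm_eq_abs, abs_of_pos hε, Real.mul_rpow hε.le (norm_nonneg _)]
    congr 2
    have : ε ^ (1 / s) ≠ 0 := by positivity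
    field_simp



theorem jensen_aux {α : Type*} [MeasurableSpace α] (μ : Measure α) (h : α → ℝ≥0∞)
    (hh : Measurable h) {r : ℝ} (hr : 1 ≤ r) :
    (∫⁻ x, h x ∂μ) ^ r ≤ (∫⁻ x, h x ^ r ∂μ) * μ univ ^ (r - 1) := by
  have hr0 : 0 < r := by linarith
  have h1 := eLpNorm'_le_eLpNorm'_mul_rpow_measure_univ (μ := μ) (f := h) zero_lt_one hr
    hh.aestronglyMeasurable
  simp only [eLpNorm', enorm_eq_self, ENNReal.rpow_one, div_one] at h1
  calc (∫⁻ x, h x ∂μ) ^ r ≤ ((∫⁻ x, h x ^ r ∂μ) ^ (1 / r) * μ univ ^ (1 - 1 / r)) ^ r := by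
        gcongr
    _ = _ := by
        rw [ENNReal.mul_rpow_of_nonneg _ _ hr0.le, ← ENNReal.rpow_mul, ← ENNReal.rpow_mul]
        congr 2
        · rw [one_div, inv_mul_cancel₀ hr0.ne', ENNReal.rpow_one]
        · field_simp

theorem young (G h : Ed d → ℝ≥0∞) (hG : Measurable G) (hh : Measurable h)
    (q : ℝ≥0∞) (hq : 1 ≤ q) :
    eLpNorm (fun ξ => ∫⁻ η, G η * h (ξ - η)) q volume ≤ (∫⁻ η, G η) * eLpNorm h q volume := by
  by_cases hq' : q = ∞
  · subst hq'
    simp only [eLpNorm_exponent_top]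
    refine essSup_le_of_ae_le _ (Eventually.of_forall fun ξ => ?_)
    simp only [enorm_eq_self]
    rw [← lintegral_mul_const _ hG]
    apply lintegral_mono_ae
    have h1 : ∀ᵐ y : Ed d, h y ≤ eLpNormEssSup h volume := by
      have := ae_le_eLpNormEssSup (f := h) (μ := (volume : Measure (Ed d)))
      simpa using this
    have h2 : ∀ᵐ η : Ed d, h (ξ - η) ≤ eLpNormEssSup h volume :=
      (Measure.measurePreserving_sub_left volume ξ).quasiMeasurePreserving.ae h1
    filter_upwards [h2] with η hη
    gcongr
  · have hq0 : q ≠ 0 := by positivity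
    have hr : 1 ≤ q.toReal := by
      rw [← ENNReal.toReal_one]; exact ENNReal.toReal_mono hq' hq
    set r := q.toReal with hrdef
    have hr0 : 0 < r := by linarith
    rw [eLpNorm_eq_lintegral_rpow_enorm_toReal hq0 hq', eLpNorm_eq_lintegral_rpow_enorm_toReal hq0 hq']
    simp only [enorm_eq_self, ← hrdef]
    set A := ∫⁻ η, G η with hA
    have hpt : ∀ ξ, (∫⁻ η, G η * h (ξ - η)) ^ r ≤ (∫⁻ η, G η * h (ξ - η) ^ r) * A ^ (r - 1) := by
      intro ξ
      have hm : Measurable (fun η => h (ξ - η)) := hh.comp (by fun_prop)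
      have := jensen_aux (volume.withDensity G) (fun η => h (ξ - η)) hm hr
      rw [lintegral_withDensity_eq_lintegral_mul _ hG hm,
        lintegral_withDensity_eq_lintegral_mul _ hG (hm.pow_const r),
        withDensity_apply _ MeasurableSet.univ] at this
      simpa using this
    have hint : ∫⁻ ξ, (∫⁻ η, G η * h (ξ - η)) ^ r ≤ A ^ r * ∫⁻ ξ, h ξ ^ r := by
      calc ∫⁻ ξ, (∫⁻ η, G η * h (ξ - η)) ^ r
          ≤ ∫⁻ ξ, (∫⁻ η, G η * h (ξ - η) ^ r) * A ^ (r - 1) := lintegral_mono hpt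
        _ = (∫⁻ ξ, ∫⁻ η, G η * h (ξ - η) ^ r) * A ^ (r - 1) := by
            rw [lintegral_mul_const]
            apply Measurable.lintegral_prod_right' (f := fun z : Ed d × Ed d => G z.2 * h (z.1 - z.2) ^ r)
            fun_prop
        _ = (∫⁻ η, ∫⁻ ξ, G η * h (ξ - η) ^ r) * A ^ (r - 1) := by
            rw [lintegral_lintegral_swap]
            apply Measurable.aemeasurable
            show Measurable (fun z : Ed d × Ed d => G z.2 * h (z.1 - z.2) ^ r)
            fun_prop
        _ = (A * ∫⁻ ξ, h ξ ^ r) * A ^ (r - 1) := by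
            congr 1
            have : ∀ η, ∫⁻ ξ, G η * h (ξ - η) ^ r = G η * ∫⁻ ξ, h ξ ^ r := by
              intro η
              rw [lintegral_const_mul _ (by fun_prop)]
              rw [lintegral_sub_right_eq_self (fun ξ => h ξ ^ r) η]
            simp_rw [this]
            rw [lintegral_mul_const _ hG]
        _ = _ := by
            have : A ^ r = A * A ^ (r - 1) := by
              nth_rewrite 2 [← ENNReal.rpow_one A]
              rw [← ENNReal.rpow_add_of_nonneg _ _ zero_le_one (by linarith)]
              congr 1; ring
            rw [this]; ring
    calc (∫⁻ ξ, (∫⁻ η, G η * h (ξ - η)) ^ r) ^ (1 / r)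
        ≤ (A ^ r * ∫⁻ ξ, h ξ ^ r) ^ (1 / r) := by gcongr
      _ = _ := by
        rw [ENNReal.mul_rpow_of_nonneg _ _ (by positivity), ← ENNReal.rpow_mul,
          mul_one_div_cancel hr0.ne', ENNReal.rpow_one]



/-- Extended-real valued version of the Fourier-Lebesgue seminorm. -/
def FN (ω : Ed d → ℝ) (q : ℝ≥0∞) (u : Ed d → ℂ) (μ : Measure (Ed d)) : ℝ≥0∞ :=
  eLpNorm (fun ξ => ‖FT u ξ‖ₑ * ENNReal.ofReal (ω ξ)) q μ

theorem FN_eq (ω : Ed d → ℝ) (hω : ∀ x, 0 < ω x) (q : ℝ≥0∞) (u : Ed d → ℂ) (μ : Measure (Ed d)) :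
    eLpNorm (fun ξ => ‖FT u ξ‖ * ω ξ) q μ = FN ω q u μ := by
  unfold FN
  apply eLpNorm_congr_enorm_ae (Eventually.of_forall fun ξ => ?_)
  simp only [enorm_mul, enorm_norm, enorm_eq_self]
  rw [Real.enorm_of_nonneg (hω ξ).le]

/-- The convolution kernel attached to a cutoff. -/
def ker (φ : Ed d → ℂ) (η : Ed d) : ℝ≥0∞ := ENNReal.ofReal (cst d) * ‖FT φ η‖ₑ

theorem measurable_FT {u : Ed d → ℂ} (hu : Integrable u) : Measurable (fun ξ => ‖FT u ξ‖ₑ) :=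
  (continuous_FT hu).enorm.measurable

theorem measurable_ker {u : Ed d → ℂ} (hu : Integrable u) : Measurable (ker u) :=
  (measurable_FT hu).const_mul _

theorem enorm_FT_mul_le {s : ℝ} (hs : 1 < s) {φ u : Ed d → ℂ} (hφ : IsSCutoff s φ)
    (hu : Integrable u) (ξ : Ed d) :
    ‖FT (fun x => φ x * u x) ξ‖ₑ ≤ ∫⁻ η, ker φ η * ‖FT u (ξ - η)‖ₑ := by
  rw [FT_mul hφ.1.continuous (integrable_cut hφ) (integrable_FT hs hφ) hu, enorm_mul]
  have h1 : ‖((cst d : ℝ) : ℂ)‖ₑ = ENNReal.ofReal (cst d) := by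
    rw [← ofReal_norm, Complex.norm_real, Real.norm_eq_abs, abs_of_pos (cst_pos d)]
  rw [h1]
  have h2 : ∀ η, ker φ η * ‖FT u (ξ - η)‖ₑ =
      ENNReal.ofReal (cst d) * (‖FT φ η * FT u (ξ - η)‖ₑ) := by
    intro η; rw [enorm_mul, ker, mul_assoc]
  simp_rw [h2]
  rw [lintegral_const_mul' _ _ ENNReal.ofReal_ne_top]
  gcongr
  exact enorm_integral_le_lintegral_enorm _

theorem mult_bound {s : ℝ} (hs : 1 < s) {φ u : Ed d → ℂ} (hφ : IsSCutoff s φ)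
    (hu : Integrable u) {ω v : Ed d → ℝ} (hωm : Measurable ω) (hvm : Measurable v)
    (hv : ∀ x, 0 ≤ v x) (hωv : ∀ x y, ω (x + y) ≤ v x * ω y) (q : ℝ≥0∞) (hq : 1 ≤ q) :
    FN ω q (fun x => φ x * u x) volume ≤
      (∫⁻ η, ker φ η * ENNReal.ofReal (v η)) * FN ω q u volume := by
  unfold FN
  refine le_trans ?_ (young (fun η => ker φ η * ENNReal.ofReal (v η)) _
    ((measurable_ker (integrable_cut hφ)).mul hvm.ennreal_ofReal)
    ((measurable_FT hu).mul hωm.ennreal_ofReal) q hq)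
  apply eLpNorm_mono_enorm
  intro ξ
  simp only [enorm_eq_self]
  calc ‖FT (fun x => φ x * u x) ξ‖ₑ * ENNReal.ofReal (ω ξ)
      ≤ (∫⁻ η, ker φ η * ‖FT u (ξ - η)‖ₑ) * ENNReal.ofReal (ω ξ) := by
        gcongr; exact enorm_FT_mul_le hs hφ hu ξ
    _ = ∫⁻ η, ker φ η * ‖FT u (ξ - η)‖ₑ * ENNReal.ofReal (ω ξ) := by
        rw [lintegral_mul_const' _ _ ENNReal.ofReal_ne_top]
    _ ≤ _ := by
        apply lintegral_mono
        intro η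
        have : ENNReal.ofReal (ω ξ) ≤ ENNReal.ofReal (v η) * ENNReal.ofReal (ω (ξ - η)) := by
          rw [← ENNReal.ofReal_mul (hv η)]
          apply ENNReal.ofReal_le_ofReal
          simpa using hωv η (ξ - η)
        calc ker φ η * ‖FT u (ξ - η)‖ₑ * ENNReal.ofReal (ω ξ)
            ≤ ker φ η * ‖FT u (ξ - η)‖ₑ * (ENNReal.ofReal (v η) * ENNReal.ofReal (ω (ξ - η))) := by
              gcongr
          _ = _ := by simp only [Pi.mul_apply]; ring

theorem ker_exp_eq {s : ℝ} (φ : Ed d → ℂ) (k : ℝ) (η : Ed d) :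
    ker φ η * ENNReal.ofReal (Real.exp (k * ‖η‖ ^ (1 / s))) =
      ENNReal.ofReal (cst d) * ENNReal.ofReal (‖FT φ η‖ * Real.exp (k * ‖η‖ ^ (1 / s))) := by
  rw [ker, ENNReal.ofReal_mul (norm_nonneg _), ofReal_norm, mul_assoc]

theorem lintegral_ker_exp {s : ℝ} (hs : 1 < s) {φ : Ed d → ℂ} (hφ : IsSCutoff s φ) (k : ℝ) :
    ∫⁻ η, ker φ η * ENNReal.ofReal (Real.exp (k * ‖η‖ ^ (1 / s))) < ∞ := by
  simp_rw [ker_exp_eq]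
  rw [lintegral_const_mul' _ _ ENNReal.ofReal_ne_top]
  exact ENNReal.mul_lt_top ENNReal.ofReal_lt_top (integrable_FT_exp hs hφ k).lintegral_lt_top

theorem integrable_cut_mul {s : ℝ} {φ u : Ed d → ℂ} (hφ : IsSCutoff s φ) (hu : Integrable u) :
    Integrable (fun x => φ x * u x) := by
  obtain ⟨B, hB⟩ := hφ.1.continuous.bounded_above_of_compact_support hφ.2.1
  exact hu.bdd_mul hφ.1.continuous.aestronglyMeasurable (Eventually.of_forall hB)

/-- A tame weight. -/
def Tame (s k C : ℝ) (ω : Ed d → ℝ) : Prop :=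
  Measurable ω ∧ (∀ x, 0 < ω x) ∧ 0 < k ∧ 0 < C ∧
    ∀ x y, ω (x + y) ≤ C * Real.exp (k * ‖x‖ ^ (1 / s)) * ω y

theorem tame_of_admissible {s : ℝ} {ω : Ed d → ℝ} (h : IsSAdmissible s ω) :
    ∃ k C, Tame s k C ω := by
  obtain ⟨hm, hpos, v, -, hv, -, -, C₀, k₀, C₁, hC₀, hk₀, hC₁, h1, h2⟩ := h
  refine ⟨k₀, C₁ * C₀, hm, hpos, hk₀, by positivity, fun x y => ?_⟩
  refine (h2 x y).trans ?_
  rw [mul_assoc C₁ C₀]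
  have := hpos y
  have h3 : C₁ * v x ≤ C₁ * (C₀ * Real.exp (k₀ * ‖x‖ ^ (1 / s))) :=
    mul_le_mul_of_nonneg_left (h1 x) hC₁.le
  exact mul_le_mul_of_nonneg_right h3 this.le

theorem mult_finite {s : ℝ} (hs : 1 < s) {φ u : Ed d → ℂ} (hφ : IsSCutoff s φ)
    (hu : Integrable u) {k C : ℝ} {ω : Ed d → ℝ} (hω : Tame s k C ω) (q : ℝ≥0∞) (hq : 1 ≤ q)
    (h : FN ω q u volume < ∞) : FN ω q (fun x => φ x * u x) volume < ∞ := by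
  have hp0 : 0 < 1 / s := by positivity
  obtain ⟨hm, hpos, hk, hC, hmod⟩ := hω
  refine (mult_bound hs hφ hu hm (v := fun x => C * Real.exp (k * ‖x‖ ^ (1 / s))) ?_
    (fun x => by positivity) hmod q hq).trans_lt (ENNReal.mul_lt_top ?_ h)
  · exact (continuous_const.mul (Real.continuous_exp.comp
      (continuous_const.mul (continuous_norm_rpow hp0)))).measurable
  · have e : ∀ η, ker φ η * ENNReal.ofReal (C * Real.exp (k * ‖η‖ ^ (1 / s))) =
      ENNReal.ofReal C * (ker φ η * ENNReal.ofReal (Real.exp (k * ‖η‖ ^ (1 / s)))) := by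
      intro η; rw [ENNReal.ofReal_mul hC.le]; ring
    simp_rw [e]
    rw [lintegral_const_mul' _ _ ENNReal.ofReal_ne_top]
    exact ENNReal.mul_lt_top ENNReal.ofReal_lt_top (lintegral_ker_exp hs hφ k)

theorem cone_finite {s : ℝ} (hs : 1 < s) {ψ u : Ed d → ℂ} (hψ : IsSCutoff s ψ)
    (hu : Integrable u) {k C : ℝ} {ω : Ed d → ℝ} (hω : Tame s k C ω) (q : ℝ≥0∞) (hq : 1 ≤ q)
    {Γ Γ' : Set (Ed d)} (hΓ : MeasurableSet Γ) {δ : ℝ} (hδ : 0 < δ)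
    (hsep : ∀ ξ ∈ Γ', ∀ η, η ∉ Γ → δ * ‖ξ‖ ≤ ‖ξ - η‖)
    (h : FN ω q u (volume.restrict Γ) < ∞) :
    FN ω q (fun x => ψ x * u x) (volume.restrict Γ') < ∞ := by
  have hp0 : 0 < 1 / s := by positivity
  obtain ⟨hm, hpos, hk, hC, hmod⟩ := hω
  set p := 1 / s with hp
  set v : Ed d → ℝ := fun x => C * Real.exp (k * ‖x‖ ^ p) with hvdef
  have hvm : Measurable v := (continuous_const.mul (Real.continuous_exp.comp
      (continuous_const.mul (continuous_norm_rpow hp0)))).measurable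
  have hv0 : ∀ x, 0 ≤ v x := fun x => by simp only [hvdef]; positivity
  set G : Ed d → ℝ≥0∞ := fun η => ker ψ η * ENNReal.ofReal (v η) with hG
  have hGm : Measurable G := (measurable_ker (integrable_cut hψ)).mul hvm.ennreal_ofReal
  set g : Ed d → ℝ≥0∞ := fun ξ => ‖FT u ξ‖ₑ * ENNReal.ofReal (ω ξ) with hg
  have hgm : Measurable g := (measurable_FT hu).mul hm.ennreal_ofReal
  have hGfin : ∫⁻ η, G η < ∞ := by
    have e : ∀ η, G η = ENNReal.ofReal C * (ker ψ η * ENNReal.ofReal (Real.exp (k * ‖η‖ ^ p))) := by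
      intro η; simp only [hG, hvdef]; rw [ENNReal.ofReal_mul hC.le]; ring
    simp_rw [e]
    rw [lintegral_const_mul' _ _ ENNReal.ofReal_ne_top]
    exact ENNReal.mul_lt_top ENNReal.ofReal_lt_top (lintegral_ker_exp hs hψ k)
  set B : ℝ≥0∞ := ENNReal.ofReal (cst d * ∫ x, ‖u x‖) with hB
  have hBu : ∀ ξ, ‖FT u ξ‖ₑ ≤ B := fun ξ => by
    rw [← ofReal_norm]; exact ENNReal.ofReal_le_ofReal (norm_FT_le u ξ)
  set M : ℝ := (k + 1) / δ ^ p with hM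
  set J : ℝ≥0∞ := ∫⁻ η, ker ψ η * ENNReal.ofReal (Real.exp (M * ‖η‖ ^ p)) with hJ
  have hJfin : J < ∞ := lintegral_ker_exp hs hψ M
  set K : ℝ≥0∞ := J * B * ENNReal.ofReal (C * ω 0) with hK
  have hKfin : K < ∞ := ENNReal.mul_lt_top (ENNReal.mul_lt_top hJfin ENNReal.ofReal_lt_top)
    ENNReal.ofReal_lt_top
  set T : Ed d → ℝ≥0∞ := fun ξ => K * ENNReal.ofReal (Real.exp (-1 * ‖ξ‖ ^ p)) with hT
  set Y : Ed d → ℝ≥0∞ := fun ξ => ∫⁻ η, G η * (Γ.indicator g) (ξ - η) with hY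
  have hTm : Measurable T := (Continuous.measurable (Real.continuous_exp.comp
      (continuous_const.mul (continuous_norm_rpow hp0)))).ennreal_ofReal.const_mul K
  have hYm : Measurable Y := by
    apply Measurable.lintegral_prod_right' (f := fun z : Ed d × Ed d =>
      G z.2 * (Γ.indicator g) (z.1 - z.2))
    exact (hGm.comp measurable_snd).mul ((hgm.indicator hΓ).comp (by fun_prop))
  have hpt : ∀ ξ ∈ Γ', ‖FT (fun x => ψ x * u x) ξ‖ₑ * ENNReal.ofReal (ω ξ) ≤ Y ξ + T ξ := by
    intro ξ hξ
    calc ‖FT (fun x => ψ x * u x) ξ‖ₑ * ENNReal.ofReal (ω ξ)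
        ≤ (∫⁻ η, ker ψ η * ‖FT u (ξ - η)‖ₑ) * ENNReal.ofReal (ω ξ) := by
          gcongr; exact enorm_FT_mul_le hs hψ hu ξ
      _ = ∫⁻ η, ker ψ η * ‖FT u (ξ - η)‖ₑ * ENNReal.ofReal (ω ξ) := by
          rw [lintegral_mul_const' _ _ ENNReal.ofReal_ne_top]
      _ ≤ ∫⁻ η, (G η * (Γ.indicator g) (ξ - η) +
            (ker ψ η * ENNReal.ofReal (Real.exp (M * ‖η‖ ^ p))) *
              (B * ENNReal.ofReal (C * ω 0) * ENNReal.ofReal (Real.exp (-1 * ‖ξ‖ ^ p)))) := by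
          apply lintegral_mono
          intro η
          by_cases hη : ξ - η ∈ Γ
          · refine le_trans ?_ le_self_add
            rw [indicator_of_mem hη]
            have : ENNReal.ofReal (ω ξ) ≤ ENNReal.ofReal (v η) * ENNReal.ofReal (ω (ξ - η)) := by
              rw [← ENNReal.ofReal_mul (hv0 η)]
              apply ENNReal.ofReal_le_ofReal
              simpa using hmod η (ξ - η)
            calc ker ψ η * ‖FT u (ξ - η)‖ₑ * ENNReal.ofReal (ω ξ)
                ≤ ker ψ η * ‖FT u (ξ - η)‖ₑ * (ENNReal.ofReal (v η) * ENNReal.ofReal (ω (ξ - η))) := by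
                  gcongr
              _ = _ := by simp only [hG, hg]; ring
          · refine le_trans ?_ le_add_self
            have h1 : δ * ‖ξ‖ ≤ ‖η‖ := by simpa using hsep ξ hξ _ hη
            have h2 : δ ^ p * ‖ξ‖ ^ p ≤ ‖η‖ ^ p := by
              rw [← Real.mul_rpow hδ.le (norm_nonneg _)]
              exact Real.rpow_le_rpow (by positivity) h1 hp0.le
            have h3 : (k + 1) * ‖ξ‖ ^ p ≤ M * ‖η‖ ^ p := by
              have hδp : 0 < δ ^ p := by positivity
              calc (k + 1) * ‖ξ‖ ^ p = M * (δ ^ p * ‖ξ‖ ^ p) := by rw [hM]; field_simp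
                _ ≤ _ := by gcongr
            have h4 : ω ξ ≤ Real.exp (M * ‖η‖ ^ p) * (C * ω 0 * Real.exp (-1 * ‖ξ‖ ^ p)) := by
              have h5 := hmod ξ 0
              rw [add_zero] at h5
              refine h5.trans ?_
              have hω0 := hpos 0
              calc C * Real.exp (k * ‖ξ‖ ^ p) * ω 0
                  ≤ C * Real.exp (M * ‖η‖ ^ p + -1 * ‖ξ‖ ^ p) * ω 0 := by gcongr; linarith
                _ = _ := by rw [Real.exp_add]; ring
            have h5 : ENNReal.ofReal (ω ξ) ≤ ENNReal.ofReal (Real.exp (M * ‖η‖ ^ p)) *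
                (ENNReal.ofReal (C * ω 0) * ENNReal.ofReal (Real.exp (-1 * ‖ξ‖ ^ p))) := by
              have hω0 := hpos 0
              rw [← ENNReal.ofReal_mul (by positivity), ← ENNReal.ofReal_mul (by positivity)]
              exact ENNReal.ofReal_le_ofReal h4
            calc ker ψ η * ‖FT u (ξ - η)‖ₑ * ENNReal.ofReal (ω ξ)
                ≤ ker ψ η * B * (ENNReal.ofReal (Real.exp (M * ‖η‖ ^ p)) *
                (ENNReal.ofReal (C * ω 0) * ENNReal.ofReal (Real.exp (-1 * ‖ξ‖ ^ p)))) := by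
                  gcongr; exact hBu _
              _ = _ := by ring
      _ = Y ξ + T ξ := by
          rw [lintegral_add_left, lintegral_mul_const]
          · simp only [hT, hK, hY, hJ]; ring
          · exact (measurable_ker (integrable_cut hψ)).mul (Continuous.measurable
              (Real.continuous_exp.comp (continuous_const.mul (continuous_norm_rpow hp0)))).ennreal_ofReal
          · exact hGm.mul ((hgm.indicator hΓ).comp (by fun_prop))
  have hYfin : eLpNorm Y q volume < ∞ := by
    refine (young G _ hGm (hgm.indicator hΓ) q hq).trans_lt (ENNReal.mul_lt_top hGfin ?_)
    rw [eLpNorm_indicator_eq_eLpNorm_restrict hΓ]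
    exact h
  have hTfin : eLpNorm T q volume < ∞ := by
    have e1 := (memLp_exp_neg (d := d) hp0 one_pos q hq).2
    have hKt : K = ENNReal.ofReal K.toReal := (ENNReal.ofReal_toReal hKfin.ne).symm
    have : eLpNorm T q volume = eLpNorm (K.toReal • fun x : Ed d => Real.exp (-1 * ‖x‖ ^ p)) q volume := by
      apply eLpNorm_congr_enorm_ae (Eventually.of_forall fun ξ => ?_)
      simp only [hT, enorm_eq_self, Pi.smul_apply, smul_eq_mul, enorm_mul]
      rw [Real.enorm_of_nonneg ENNReal.toReal_nonneg, Real.enorm_of_nonneg (Real.exp_pos _).le, ← hKt]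
    rw [this, eLpNorm_const_smul]
    exact ENNReal.mul_lt_top (by simp) e1
  have hsum : eLpNorm (fun ξ => Y ξ + T ξ) q volume < ∞ :=
    (eLpNorm_add_le hYm.aestronglyMeasurable hTm.aestronglyMeasurable hq).trans_lt
      (ENNReal.add_lt_top.2 ⟨hYfin, hTfin⟩)
  have hind : FN ω q (fun x => ψ x * u x) (volume.restrict Γ') ≤
      eLpNorm (fun ξ => Y ξ + T ξ) q (volume.restrict Γ') := by
    unfold FN
    apply eLpNorm_mono_enorm_ae
    simp only [enorm_eq_self]
    have hFm : Measurable (fun ξ => ‖FT (fun x => ψ x * u x) ξ‖ₑ * ENNReal.ofReal (ω ξ)) := by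
      exact (measurable_FT (integrable_cut_mul hψ hu)).mul hm.ennreal_ofReal
    have hYT : Measurable (fun ξ => Y ξ + T ξ) := hYm.add hTm
    rw [ae_restrict_iff (measurableSet_le hFm hYT)]
    exact Eventually.of_forall hpt
  exact hind.trans_lt ((eLpNorm_mono_measure _ Measure.restrict_le_self).trans_lt hsum)

open scoped FourierTransform


theorem rpow_absorb {p p' N c : ℝ} (hp : 0 < p) (hpp : p < p') (hN : 0 < N) (hc : 0 < c) :
    ∃ B : ℝ, ∀ r : ℝ, 0 ≤ r → N * r ^ p ≤ c * r ^ p' + B := by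
  set R : ℝ := (N / c) ^ (1 / (p' - p)) with hR
  have hR0 : 0 < R := by positivity
  refine ⟨N * R ^ p, fun r hr => ?_⟩
  rcases le_total r R with h | h
  · have h1 : r ^ p ≤ R ^ p := Real.rpow_le_rpow hr h hp.le
    have h2 : 0 ≤ c * r ^ p' := by positivity
    nlinarith
  · have hr0 : 0 < r := hR0.trans_le h
    have h1 : R ^ (p' - p) ≤ r ^ (p' - p) := Real.rpow_le_rpow hR0.le h (by linarith)
    have h2 : R ^ (p' - p) = N / c := by
      rw [hR, ← Real.rpow_mul (by positivity), one_div, inv_mul_cancel₀ (by linarith), Real.rpow_one]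
    have h3 : r ^ p' = r ^ (p' - p) * r ^ p := by
      rw [← Real.rpow_add hr0]; congr 1; ring
    have h4 : N ≤ c * r ^ (p' - p) := by
      rw [h2, div_le_iff₀ hc] at h1; linarith
    have h5 : 0 ≤ r ^ p := by positivity
    have h6 : 0 ≤ N * R ^ p := by positivity
    rw [h3]
    nlinarith

theorem ball_char (d : ℕ) : ∃ ν : Measure (Ed d), IsProbabilityMeasure ν ∧ (∀ᵐ x ∂ν, ‖x‖ ≤ 1) ∧
    ∃ M : ℝ, 0 < M ∧ ∀ ξ : Ed d, M ≤ ‖ξ‖ → ‖charFun ν ξ‖ ≤ Real.exp (-1) := by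
  set S : Set (Ed d) := Metric.ball 0 1 with hS
  have hSm : MeasurableSet S := measurableSet_ball
  have h0 : volume S ≠ 0 := (Metric.measure_ball_pos volume 0 one_pos).ne'
  have ht : volume S ≠ ∞ := measure_ball_lt_top.ne
  set c : ℝ≥0∞ := (volume S)⁻¹ with hc
  set ν : Measure (Ed d) := c • volume.restrict S with hν
  have hct : c ≠ ∞ := ENNReal.inv_ne_top.2 h0
  refine ⟨ν, ⟨?_⟩, ?_, ?_⟩
  · simp [hν, hc, ENNReal.inv_mul_cancel h0 ht]
  · apply Measure.ae_smul_measure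
    filter_upwards [ae_restrict_mem hSm] with x hx
    simpa [hS] using (mem_ball_zero_iff.1 hx).le
  · have hRL := tendsto_integral_exp_inner_smul_cocompact (V := Ed d)
      (S.indicator fun _ : Ed d => (1 : ℂ))
    have hcR : 0 < c.toReal := ENNReal.toReal_pos (by simp [hc, ht]) hct
    have he : 0 < Real.exp (-1) / c.toReal := by positivity
    have h1 := (hRL.norm.eventually (Iio_mem_nhds (by simpa using he)))
    rw [← comap_norm_atTop (E := Ed d) |> fun h => h.trans (Metric.cobounded_eq_cocompact)] at h1
    rw [eventually_comap, eventually_atTop] at h1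
    obtain ⟨T, hT⟩ := h1
    refine ⟨2 * Real.pi * max T 1, by positivity, fun ξ hξ => ?_⟩
    have h2 := hT (‖(-(2 * Real.pi)⁻¹) • ξ‖) (by
      rw [norm_smul, norm_neg, norm_inv, Real.norm_of_nonneg (by positivity : (0:ℝ) ≤ 2 * Real.pi),
        ← div_eq_inv_mul, le_div_iff₀ (by positivity)]
      have := le_max_left T 1
      nlinarith [Real.pi_pos]) _ rfl
    have h3 : charFun ν ξ = c.toReal * ∫ v, 𝐞 (-⟪v, (-(2 * Real.pi)⁻¹) • ξ⟫) •
        (S.indicator (fun _ : Ed d => (1 : ℂ)) v) := by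
      rw [charFun_apply, hν, integral_smul_measure, ← integral_indicator hSm, Complex.real_smul]
      congr 2
      ext v
      by_cases hv : v ∈ S
      · simp only [indicator_of_mem hv, Circle.smul_def, Real.fourierChar_apply, smul_eq_mul, mul_one,
          inner_smul_right]
        congr 1
        have := Real.pi_ne_zero
        push_cast
        field_simp
      · simp [indicator_of_notMem hv]
    rw [h3, norm_mul, Complex.norm_real, Real.norm_of_nonneg hcR.le]
    have h4 : ‖∫ v, 𝐞 (-⟪v, (-(2 * Real.pi)⁻¹) • ξ⟫) •
        (S.indicator (fun _ : Ed d => (1 : ℂ)) v)‖ < Real.exp (-1) / c.toReal := h2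
    rw [lt_div_iff₀ hcR] at h4
    linarith

theorem exists_meas {s : ℝ} (hs : 1 < s) (d : ℕ) : ∃ μ : Measure (Ed d), IsProbabilityMeasure μ ∧
    ∃ A : ℝ, 0 < A ∧ (∀ᵐ y ∂μ, ‖y‖ ≤ A) ∧
    ∀ N : ℝ, 0 < N → ∃ C : ℝ, 0 < C ∧
      ∀ ξ, ‖charFun μ ξ‖ ≤ C * Real.exp (-N * ‖ξ‖ ^ (1 / s)) := by
  obtain ⟨ν, hν, hν1, M, hM, hνM⟩ := ball_char d
  set σ : ℝ := (1 + s) / 2 with hσ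
  have hσ1 : 1 < σ := by rw [hσ]; linarith
  have hσs : σ < s := by rw [hσ]; linarith
  set a : ℕ → ℝ := fun j => ((j : ℝ) + 1) ^ (-σ) with ha
  have ha0 : ∀ j, 0 < a j := fun j => by simp only [ha]; positivity
  have hasum : Summable a := by
    have := (summable_nat_add_iff 1).2 (Real.summable_nat_rpow (p := -σ) |>.2 (by linarith))
    simpa [ha] using this
  set P : Measure (ℕ → Ed d) := Measure.infinitePi (fun _ => ν) with hP
  have hPae : ∀ᵐ w ∂P, ∀ j, ‖w j‖ ≤ 1 := by
    rw [ae_all_iff]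
    intro j
    exact (measurePreserving_eval_infinitePi (fun _ : ℕ => ν) j).quasiMeasurePreserving.ae hν1
  set X : (ℕ → Ed d) → Ed d := fun w => ∑' j, a j • w j with hX
  set S : ℕ → (ℕ → Ed d) → Ed d := fun n w => ∑ j ∈ Finset.range n, a j • w j with hSdef
  have hbd : ∀ w : ℕ → Ed d, (∀ j, ‖w j‖ ≤ 1) → ∀ j, ‖a j • w j‖ ≤ a j := fun w hw j => by
    rw [norm_smul, Real.norm_of_nonneg (ha0 j).le]
    exact mul_le_of_le_one_right (ha0 j).le (hw j)
  have hlim : ∀ᵐ w ∂P, Tendsto (fun n => S n w) atTop (𝓝 (X w)) := by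
    filter_upwards [hPae] with w hw
    exact (Summable.of_norm_bounded hasum (hbd w hw)).hasSum.tendsto_sum_nat
  have hSm : ∀ n, Measurable (S n) := fun n => by
    simp only [hSdef]
    fun_prop
  have hXm : AEMeasurable X P :=
    aemeasurable_of_tendsto_metrizable_ae atTop (fun n => (hSm n).aemeasurable) hlim
  have hchS : ∀ n ξ, charFun (P.map (S n)) ξ = ∏ j ∈ Finset.range n, charFun ν (a j • ξ) := by
    intro n ξ
    have hind : ProbabilityTheory.iIndepFun (fun (j : ℕ) (w : ℕ → Ed d) => a j • w j) P :=
      ProbabilityTheory.iIndepFun_infinitePi (P := fun _ : ℕ => ν) (X := fun j x => a j • x)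
        (fun j => by fun_prop)
    have := ProbabilityTheory.iIndepFun.charFun_map_fun_finsetSum_eq_prod (s := Finset.range n)
      (X := fun (j : ℕ) (w : ℕ → Ed d) => a j • w j) (P := P)
      (fun j _ => ((measurable_pi_apply j).const_smul (a j)).aemeasurable) (hind.restrict _)
    simp only [hSdef]
    rw [this, Finset.prod_apply]
    refine Finset.prod_congr rfl fun j _ => ?_
    have h1 : P.map (fun w => a j • w j) = ν.map (fun x => a j • x) := by
      rw [← Measure.infinitePi_map_eval (fun _ : ℕ => ν) j, Measure.map_map (by fun_prop) (by fun_prop)]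
      rfl
    rw [h1, charFun_map_smul]
  have hchX : ∀ ξ, Tendsto (fun n => charFun (P.map (S n)) ξ) atTop (𝓝 (charFun (P.map X) ξ)) := by
    intro ξ
    have hcont : Continuous (fun y : Ed d => Complex.exp (⟪y, ξ⟫ * Complex.I)) := by fun_prop
    simp only [charFun_apply]
    rw [integral_map hXm hcont.aestronglyMeasurable]
    have : ∀ n, ∫ x, Complex.exp (⟪x, ξ⟫ * Complex.I) ∂(P.map (S n)) =
        ∫ w, Complex.exp (⟪S n w, ξ⟫ * Complex.I) ∂P := fun n =>
      integral_map (hSm n).aemeasurable hcont.aestronglyMeasurable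
    simp_rw [this]
    refine tendsto_integral_of_dominated_convergence (fun _ => (1:ℝ))
      (fun n => (hcont.measurable.comp (hSm n)).aestronglyMeasurable) (integrable_const _) ?_ ?_
    · intro n
      exact Eventually.of_forall fun w => by rw [Complex.norm_exp_ofReal_mul_I]
    · filter_upwards [hlim] with w hw
      exact (hcont.tendsto _).comp hw
  have hpX : IsProbabilityMeasure (P.map X) := Measure.isProbabilityMeasure_map hXm
  have hbn : ∀ ξ n, (∀ j < n, M ≤ a j * ‖ξ‖) → ‖charFun (P.map X) ξ‖ ≤ Real.exp (-1) ^ n := by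
    intro ξ n hn
    refine le_of_tendsto (hchX ξ).norm ?_
    filter_upwards [eventually_ge_atTop n] with m hm
    rw [hchS, ← Finset.prod_range_mul_prod_Ico _ hm, norm_mul, norm_prod, norm_prod]
    have h1 : ∏ j ∈ Finset.range n, ‖charFun ν (a j • ξ)‖ ≤ Real.exp (-1) ^ n := by
      calc _ ≤ ∏ j ∈ Finset.range n, Real.exp (-1) := by
            refine Finset.prod_le_prod (fun _ _ => norm_nonneg _) fun j hj => hνM _ ?_
            rw [norm_smul, Real.norm_of_nonneg (ha0 j).le]
            exact hn j (Finset.mem_range.1 hj)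
        _ = _ := by simp
    have h2 : ∏ j ∈ Finset.Ico n m, ‖charFun ν (a j • ξ)‖ ≤ 1 :=
      Finset.prod_le_one (fun _ _ => norm_nonneg _) fun j _ => norm_charFun_le_one _
    calc _ ≤ Real.exp (-1) ^ n * 1 := by
          apply mul_le_mul h1 h2 (Finset.prod_nonneg fun _ _ => norm_nonneg _) (by positivity)
      _ = _ := mul_one _
  refine ⟨P.map X, hpX, ∑' j, a j, ?_, ?_, ?_⟩
  · exact hasum.tsum_pos (fun j => (ha0 j).le) 0 (ha0 0)
  · rw [ae_map_iff hXm (measurableSet_le measurable_norm measurable_const)]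
    filter_upwards [hPae] with w hw
    exact tsum_of_norm_bounded hasum.hasSum (hbd w hw)
  · intro N hN
    have hσ0 : 0 < σ := by linarith
    obtain ⟨B, hB⟩ := rpow_absorb (p := 1 / s) (p' := 1 / σ) (N := N) (c := (M ^ (1 / σ))⁻¹)
      (by positivity) (one_div_lt_one_div_of_lt hσ0 hσs) hN (by positivity)
    refine ⟨Real.exp (1 + B), by positivity, fun ξ => ?_⟩
    set t : ℝ := (‖ξ‖ / M) ^ (1 / σ) with ht
    have ht0 : 0 ≤ t := by positivity
    have h1 := hbn ξ ⌊t⌋₊ (by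
      intro j hj
      have hj1 : (j : ℝ) + 1 ≤ t := by
        have : j + 1 ≤ ⌊t⌋₊ := hj
        have := (Nat.le_floor_iff ht0).1 this
        exact_mod_cast this
      have hj2 : ((j : ℝ) + 1) ^ σ ≤ ‖ξ‖ / M := by
        have := Real.rpow_le_rpow (by positivity) hj1 hσ0.le
        rwa [ht, ← Real.rpow_mul (by positivity), one_div, inv_mul_cancel₀ hσ0.ne', Real.rpow_one] at this
      simp only [ha]
      rw [Real.rpow_neg (by positivity), ← div_eq_inv_mul, le_div_iff₀ (by positivity)]
      rw [le_div_iff₀ hM] at hj2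
      linarith)
    refine h1.trans ?_
    rw [← Real.exp_nat_mul, ← Real.exp_add]
    apply Real.exp_le_exp.2
    have h2 := Nat.lt_floor_add_one t
    have h3 := hB ‖ξ‖ (norm_nonneg _)
    have h4 : t = (M ^ (1 / σ))⁻¹ * ‖ξ‖ ^ (1 / σ) := by
      rw [ht, Real.div_rpow (norm_nonneg _) hM.le]; ring
    rw [← h4] at h3
    linarith

theorem exists_cut {s : ℝ} (hs : 1 < s) (d : ℕ) : ∃ χ : Ed d → ℂ, IsSCutoff s χ ∧
    ∃ r : ℝ, 0 < r ∧ ∀ x, ‖x‖ < r → χ x = 1 := by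
  obtain ⟨μ, hμ, A, hA, hμA, hdec⟩ := exists_meas hs d
  let b : ContDiffBump (0 : Ed d) := ⟨A + 1, A + 2, by linarith, by linarith⟩
  set g : Ed d → ℂ := fun x => (b x : ℂ) with hg
  have hgs : ContDiff ℝ (⊤ : ℕ∞) g := Complex.ofRealCLM.contDiff.comp b.contDiff
  have hgc : HasCompactSupport g := b.hasCompactSupport.comp_left (g := fun x : ℝ => (x : ℂ)) (by simp)
  have hgi : Integrable g := hgs.continuous.integrable_of_hasCompactSupport hgc
  have hg1 : ∀ x, ‖g x‖ ≤ 1 := fun x => by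
    simp only [hg, Complex.norm_real, Real.norm_of_nonneg b.nonneg]; exact b.le_one
  set χ : Ed d → ℂ := fun x => ∫ y, g (x - y) ∂μ with hχ
  have hconv : χ = convolution (fun _ => (1:ℂ)) g (ContinuousLinearMap.mul ℝ ℂ) μ := by
    ext x; simp [hχ, convolution]
  have hFT : ∀ ξ, FT χ ξ = charFun μ (-ξ) * FT g ξ := by
    intro ξ
    have hc : ∀ y, osc y ξ = Complex.exp (⟪y, -ξ⟫ * Complex.I) := fun y => by
      simp [osc, inner_neg_right]
    rw [FT_def, FT_def, charFun_apply]
    simp_rw [← hc]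
    have h1 : ∫ x, χ x * osc x ξ = ∫ x, ∫ y, g (x - y) * osc x ξ ∂μ := by
      simp_rw [hχ, integral_mul_const]
    have hint : Integrable (fun z : Ed d × Ed d => g (z.1 - z.2) * osc z.1 ξ) (volume.prod μ) := by
      have hm : AEStronglyMeasurable (fun z : Ed d × Ed d => g (z.1 - z.2) * osc z.1 ξ) (volume.prod μ) := by
        refine Continuous.aestronglyMeasurable ?_
        exact (hgs.continuous.comp (by fun_prop)).mul (continuous_osc.comp (by fun_prop :
          Continuous fun z : Ed d × Ed d => (z.1, ξ)))
      rw [integrable_prod_iff' hm]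
      constructor
      · exact Eventually.of_forall fun y => integrable_mul_osc (hgi.comp_sub_right y) ξ
      · simp only [norm_mul, norm_osc, mul_one]
        have : ∀ y : Ed d, ∫ x, ‖g (x - y)‖ = ∫ x, ‖g x‖ := fun y =>
          integral_sub_right_eq_self (fun x => ‖g x‖) y
        simp_rw [this]
        exact integrable_const _
    rw [h1, integral_integral_swap hint]
    have h2 : ∀ y : Ed d, ∫ x, g (x - y) * osc x ξ = osc y ξ * ∫ x, g x * osc x ξ := by
      intro y
      rw [← integral_sub_right_eq_self (fun x => g x * osc x ξ) y, ← integral_const_mul]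
      congr 1; ext x
      have : osc x ξ = osc (x - y) ξ * osc y ξ := by rw [← osc_add_left]; simp
      rw [this]; ring
    simp_rw [h2, integral_mul_const]
    ring
  refine ⟨χ, ⟨?_, ?_, ?_⟩, 1, one_pos, ?_⟩
  · rw [hconv]
    exact hgc.contDiff_convolution_right _ (locallyIntegrable_const _) hgs
  · refine HasCompactSupport.of_support_subset_isCompact (isCompact_closedBall (0 : Ed d) (2 * A + 2)) ?_
    intro x hx
    by_contra hx'
    apply hx
    simp only [hχ]
    apply integral_eq_zero_of_ae
    filter_upwards [hμA] with y hy
    simp only [hg, Pi.zero_apply, Complex.ofReal_eq_zero]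
    apply b.zero_of_le_dist
    simp only [mem_closedBall_zero_iff, not_le] at hx'
    rw [dist_zero_right]
    have := norm_sub_norm_le x y
    show A + 2 ≤ _
    linarith
  · intro N hN
    obtain ⟨C, hC, hb⟩ := hdec N hN
    set B := cst d * ∫ x, ‖g x‖ with hBd
    have hB0 : 0 ≤ B := mul_nonneg (cst_pos d).le (integral_nonneg fun _ => norm_nonneg _)
    refine ⟨C * (B + 1), by positivity, fun ξ => ?_⟩
    rw [hFT, norm_mul]
    have h1 := hb (-ξ)
    rw [norm_neg] at h1
    have h2 := norm_FT_le g ξ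
    calc _ ≤ (C * Real.exp (-N * ‖ξ‖ ^ (1 / s))) * (B + 1) := by
          apply mul_le_mul h1 (by linarith) (norm_nonneg _) (by positivity)
      _ = _ := by ring
  · intro x hx
    have : χ x = ∫ y, (1 : ℂ) ∂μ := by
      simp only [hχ]
      apply integral_congr_ae
      filter_upwards [hμA] with y hy
      simp only [hg]
      rw [b.one_of_mem_closedBall]; · simp
      rw [mem_closedBall_zero_iff]
      show _ ≤ A + 1
      have := norm_sub_le x y
      linarith
    rw [this]; simp



theorem translation_L1 {s : ℝ} (hs : 1 < s) {χ : Ed d → ℂ} (hχ : IsSCutoff s χ) (η : Ed d) :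
    Tendsto (fun n : ℕ => ∫⁻ ζ, ‖FT χ ζ - FT χ (ζ - (1 / ((n : ℝ) + 1)) • η)‖ₑ) atTop (𝓝 0) := by
  have hp0 : 0 < 1 / s := by positivity
  have hp1 : 1 / s < 1 := by rw [div_lt_one (by linarith)]; exact hs
  obtain ⟨C, hC, hb⟩ := hχ.2.2 1 one_pos
  have hcF := continuous_FT (integrable_cut hχ)
  have hD : Integrable (fun ζ : Ed d => (C + C * Real.exp (‖η‖ ^ (1 / s))) * Real.exp (-1 * ‖ζ‖ ^ (1 / s))) :=
    (integrable_exp_neg hp0 one_pos).const_mul _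
  have key := tendsto_lintegral_of_dominated_convergence (μ := (volume : Measure (Ed d)))
    (F := fun (n : ℕ) ζ => ‖FT χ ζ - FT χ (ζ - (1 / ((n : ℝ) + 1)) • η)‖ₑ) (f := fun _ => 0)
    (fun ζ => ENNReal.ofReal ((C + C * Real.exp (‖η‖ ^ (1 / s))) * Real.exp (-1 * ‖ζ‖ ^ (1 / s))))
    (fun n => (hcF.sub (hcF.comp (by fun_prop))).enorm.measurable) ?_ hD.lintegral_lt_top.ne ?_
  · simpa using key
  · intro n
    refine Eventually.of_forall fun ζ => ?_
    dsimp only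
    rw [← ofReal_norm]
    apply ENNReal.ofReal_le_ofReal
    refine (norm_sub_le _ _).trans ?_
    have h1 := hb ζ
    have h2 := hb (ζ - (1 / ((n : ℝ) + 1)) • η)
    have h3 : ‖(1 / ((n : ℝ) + 1)) • η‖ ≤ ‖η‖ := by
      rw [norm_smul, Real.norm_of_nonneg (by positivity)]
      apply mul_le_of_le_one_left (norm_nonneg _)
      rw [div_le_one (by positivity)]
      have : (0:ℝ) ≤ n := by positivity
      linarith
    have h4 : ‖ζ‖ ^ (1 / s) ≤ ‖ζ - (1 / ((n : ℝ) + 1)) • η‖ ^ (1 / s) + ‖η‖ ^ (1 / s) := by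
      apply rpow_le_add hp0 hp1 (norm_nonneg _) (norm_nonneg _) (norm_nonneg _)
      have := norm_sub_norm_le ζ ((1 / ((n : ℝ) + 1)) • η)
      linarith
    have h5 : C * Real.exp (-1 * ‖ζ - (1 / ((n : ℝ) + 1)) • η‖ ^ (1 / s)) ≤
        C * (Real.exp (‖η‖ ^ (1 / s)) * Real.exp (-1 * ‖ζ‖ ^ (1 / s))) := by
      rw [← Real.exp_add]
      gcongr
      linarith
    linarith
  · refine Eventually.of_forall fun ζ => ?_
    have h1 : Tendsto (fun n : ℕ => (1 / ((n : ℝ) + 1))) atTop (𝓝 0) :=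
      tendsto_one_div_add_atTop_nhds_zero_nat
    have h2 : Continuous (fun t : ℝ => ‖FT χ ζ - FT χ (ζ - t • η)‖ₑ) :=
      (continuous_const.sub (hcF.comp (by fun_prop))).enorm
    have := (h2.tendsto 0).comp h1
    simpa [Function.comp_def] using this

theorem lintegral_scale (h : Ed d → ℝ≥0∞) {ε : ℝ} (hε : 0 < ε) :
    ENNReal.ofReal (ε ^ d) * ∫⁻ ξ, h (ε • ξ) = ∫⁻ ξ, h ξ := by
  have h1 := Measure.map_addHaar_smul (volume : Measure (Ed d)) hε.ne'
  have h2 : ∫⁻ ξ, h (ε • ξ) = ∫⁻ ξ, h ξ ∂(Measure.map (fun x => ε • x) volume) := by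
    exact ((Homeomorph.smulOfNeZero (α := Ed d) ε hε.ne').measurableEmbedding.lintegral_map h).symm
  have h3 : (Measure.map (fun x => ε • x) volume : Measure (Ed d)) =
     ENNReal.ofReal |(ε ^ d)⁻¹| • volume := by
    rw [h1, finrank_euclideanSpace_fin]
  rw [h2, h3, lintegral_smul_measure, smul_eq_mul, ← mul_assoc, ← ENNReal.ofReal_mul (by positivity),
    abs_of_pos (by positivity), mul_inv_cancel₀ (by positivity)]
  simp

/-- The localized remainder. -/
def rem (χ Φ : Ed d → ℂ) (x₀ : Ed d) (ε : ℝ) (x : Ed d) : ℂ :=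
  χ (ε⁻¹ • (x - x₀)) + (-1) * (Φ x * χ (ε⁻¹ • (x - x₀)))

theorem cut_rem {s : ℝ} (hs : 1 < s) {χ Φ : Ed d → ℂ} (hχ : IsSCutoff s χ) (hΦ : IsSCutoff s Φ)
    (x₀ : Ed d) {ε : ℝ} (hε : 0 < ε) : IsSCutoff s (rem χ Φ x₀ ε) :=
  cut_add (cut_scale hs hχ hε x₀) (cut_const_mul _ (cut_mul hs hΦ (cut_scale hs hχ hε x₀)))

theorem FT_rem {s : ℝ} (hs : 1 < s) {χ Φ : Ed d → ℂ} (hχ : IsSCutoff s χ) (hΦ : IsSCutoff s Φ)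
    (x₀ : Ed d) (h1 : Φ x₀ = 1) {ε : ℝ} (hε : 0 < ε) (ξ : Ed d) :
    FT (rem χ Φ x₀ ε) ξ = cst d * ∫ η, FT Φ η * ((ε ^ d : ℝ) * osc x₀ (ξ - η) *
      (FT χ (ε • ξ) - FT χ (ε • ξ - ε • η))) := by
  have hχε := cut_scale hs hχ hε x₀
  have hiΦ := integrable_FT hs hΦ
  unfold rem
  rw [FT_add (integrable_cut hχε) (integrable_cut (cut_const_mul _ (cut_mul hs hΦ hχε))),
    FT_const_mul, FT_mul hΦ.1.continuous (integrable_cut hΦ) hiΦ (integrable_cut hχε)]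
  have hinv := inversion hΦ.1.continuous (integrable_cut hΦ) hiΦ x₀
  rw [h1] at hinv
  have e1 : FT (fun x => χ (ε⁻¹ • (x - x₀))) ξ =
      cst d * ∫ η, FT Φ η * osc x₀ (-η) * ((ε ^ d : ℝ) * osc x₀ ξ * FT χ (ε • ξ)) := by
    rw [integral_mul_const, ← mul_assoc, ← hinv, one_mul, FT_scale χ hε]
  rw [e1]
  have hbF : ∀ ζ, ‖FT χ ζ‖ ≤ cst d * ∫ x, ‖χ x‖ := norm_FT_le χ
  have hcF := continuous_FT (integrable_cut hχ)
  have i1 : Integrable (fun η => FT Φ η * osc x₀ (-η) * ((ε ^ d : ℝ) * osc x₀ ξ * FT χ (ε • ξ))) := by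
    apply Integrable.mul_const
    refine hiΦ.mono (hiΦ.1.mul (continuous_osc.comp (by fun_prop :
      Continuous fun η : Ed d => (x₀, -η))).aestronglyMeasurable) (Eventually.of_forall fun η => ?_)
    rw [norm_mul, norm_osc, mul_one]
  have i2 : Integrable (fun η => FT Φ η * FT (fun x => χ (ε⁻¹ • (x - x₀))) (ξ - η)) := by
    refine hiΦ.mul_bdd (c := cst d * ∫ x, ‖χ (ε⁻¹ • (x - x₀))‖) ?_ (Eventually.of_forall fun η => norm_FT_le _ _)
    exact ((continuous_FT (integrable_cut hχε)).comp (by fun_prop)).aestronglyMeasurable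
  rw [neg_one_mul, ← sub_eq_add_neg, ← mul_sub, ← integral_sub i1 i2]
  congr 2
  ext η
  rw [FT_scale χ hε, sub_eq_add_neg ξ η, osc_add_right, ← sub_eq_add_neg, smul_sub]
  ring

theorem small_kernel {s : ℝ} (hs : 1 < s) {χ Φ : Ed d → ℂ} (hχ : IsSCutoff s χ)
    (hΦ : IsSCutoff s Φ) (x₀ : Ed d) (h1 : Φ x₀ = 1) :
    ∃ ε : ℝ, 0 < ε ∧ ∫⁻ η, ker (rem χ Φ x₀ ε) η ≤ 1 / 4 := by
  have hcF := continuous_FT (integrable_cut hχ)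
  have hcΦ := continuous_FT (integrable_cut hΦ)
  have hiΦ := integrable_FT hs hΦ
  have hiχ := integrable_FT hs hχ
  set c := ENNReal.ofReal (cst d) with hc
  set D : ℝ → Ed d → ℝ≥0∞ := fun ε η => ∫⁻ ζ, ‖FT χ ζ - FT χ (ζ - ε • η)‖ₑ with hD
  have hDm : ∀ ε, Measurable (D ε) := fun ε => by
    apply Measurable.lintegral_prod_right' (f := fun z : Ed d × Ed d =>
      ‖FT χ z.2 - FT χ (z.2 - ε • z.1)‖ₑ)
    exact ((hcF.comp continuous_snd).sub (hcF.comp (by fun_prop))).enorm.measurable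
  have hbound : ∀ ε : ℝ, 0 < ε → ∫⁻ η, ker (rem χ Φ x₀ ε) η ≤ c * (c * ∫⁻ η, ‖FT Φ η‖ₑ * D ε η) := by
    intro ε hε
    unfold ker
    rw [lintegral_const_mul' _ _ ENNReal.ofReal_ne_top]
    refine mul_le_mul_right ?_ _
    have hpt : ∀ ξ, ‖FT (rem χ Φ x₀ ε) ξ‖ₑ ≤ c * ∫⁻ η, ‖FT Φ η‖ₑ * (ENNReal.ofReal (ε ^ d) *
        ‖FT χ (ε • ξ) - FT χ (ε • ξ - ε • η)‖ₑ) := by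
      intro ξ
      rw [FT_rem hs hχ hΦ x₀ h1 hε, enorm_mul]
      have e1 : ‖((cst d : ℝ) : ℂ)‖ₑ = c := by
        rw [← ofReal_norm, Complex.norm_real, Real.norm_eq_abs, abs_of_pos (cst_pos d)]
      rw [e1]
      gcongr
      refine (enorm_integral_le_lintegral_enorm _).trans (le_of_eq ?_)
      congr 1; ext η
      have e2 : ‖((ε ^ d : ℝ) : ℂ)‖ₑ = ENNReal.ofReal (ε ^ d) := by
        rw [← ofReal_norm, Complex.norm_real, Real.norm_eq_abs, abs_of_pos (by positivity)]
      have e3 : ‖osc x₀ (ξ - η)‖ₑ = 1 := by rw [← ofReal_norm, norm_osc]; simp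
      rw [enorm_mul, enorm_mul, enorm_mul, e2, e3, mul_one]
    calc _ ≤ ∫⁻ ξ, c * ∫⁻ η, ‖FT Φ η‖ₑ * (ENNReal.ofReal (ε ^ d) *
        ‖FT χ (ε • ξ) - FT χ (ε • ξ - ε • η)‖ₑ) := lintegral_mono hpt
      _ = c * ∫⁻ ξ, ∫⁻ η, ‖FT Φ η‖ₑ * (ENNReal.ofReal (ε ^ d) *
        ‖FT χ (ε • ξ) - FT χ (ε • ξ - ε • η)‖ₑ) := lintegral_const_mul' _ _ ENNReal.ofReal_ne_top
      _ = c * ∫⁻ η, ∫⁻ ξ, ‖FT Φ η‖ₑ * (ENNReal.ofReal (ε ^ d) *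
        ‖FT χ (ε • ξ) - FT χ (ε • ξ - ε • η)‖ₑ) := by
          rw [lintegral_lintegral_swap]
          apply Measurable.aemeasurable
          apply Measurable.mul (hcΦ.comp continuous_snd).enorm.measurable
          apply Measurable.const_mul
          exact ((hcF.comp (by fun_prop)).sub (hcF.comp (by fun_prop))).enorm.measurable
      _ ≤ _ := by
          gcongr with η
          rw [lintegral_const_mul' _ _ enorm_ne_top, lintegral_const_mul' _ _ ENNReal.ofReal_ne_top]
          gcongr
          exact (lintegral_scale (fun ζ => ‖FT χ ζ - FT χ (ζ - ε • η)‖ₑ) hε).le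
  have hDb : ∀ ε η, D ε η ≤ 2 * ∫⁻ ζ, ‖FT χ ζ‖ₑ := by
    intro ε η
    calc D ε η ≤ ∫⁻ ζ, (‖FT χ ζ‖ₑ + ‖FT χ (ζ - ε • η)‖ₑ) := lintegral_mono fun ζ => enorm_sub_le
      _ = _ := by
        rw [lintegral_add_left hcF.enorm.measurable,
          lintegral_sub_right_eq_self (fun ζ => ‖FT χ ζ‖ₑ), two_mul]
  have hfin : ∫⁻ η, ‖FT Φ η‖ₑ * (2 * ∫⁻ ζ, ‖FT χ ζ‖ₑ) ≠ ∞ := by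
    have h2 : 2 * ∫⁻ ζ, ‖FT χ ζ‖ₑ ≠ ∞ := ENNReal.mul_ne_top (by simp) hiχ.2.ne
    rw [lintegral_mul_const' _ _ h2]
    exact ENNReal.mul_ne_top hiΦ.2.ne h2
  have hlim : Tendsto (fun n : ℕ => ∫⁻ η, ‖FT Φ η‖ₑ * D (1 / ((n : ℝ) + 1)) η) atTop (𝓝 0) := by
    have key := tendsto_lintegral_of_dominated_convergence (μ := (volume : Measure (Ed d)))
      (F := fun (n : ℕ) η => ‖FT Φ η‖ₑ * D (1 / ((n : ℝ) + 1)) η) (f := fun _ => 0)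
      (fun η => ‖FT Φ η‖ₑ * (2 * ∫⁻ ζ, ‖FT χ ζ‖ₑ))
      (fun n => hcΦ.enorm.measurable.mul (hDm _))
      (fun n => Eventually.of_forall fun η => mul_le_mul_right (hDb _ _) _) hfin
      (Eventually.of_forall fun η => by
        have := ENNReal.Tendsto.const_mul (a := ‖FT Φ η‖ₑ) (translation_L1 hs hχ η) (Or.inr enorm_ne_top)
        simpa using this)
    simpa using key
  have hlim2 : Tendsto (fun n : ℕ => c * (c * ∫⁻ η, ‖FT Φ η‖ₑ * D (1 / ((n : ℝ) + 1)) η)) atTop (𝓝 0) := by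
    have := ENNReal.Tendsto.const_mul (a := c) (ENNReal.Tendsto.const_mul (a := c) hlim
      (Or.inr ENNReal.ofReal_ne_top)) (Or.inr ENNReal.ofReal_ne_top)
    simpa using this
  obtain ⟨n, hn⟩ := (hlim2.eventually (Iio_mem_nhds (by simp : (0:ℝ≥0∞) < 1 / 4))).exists
  refine ⟨1 / ((n : ℝ) + 1), by positivity, (hbound _ (by positivity)).trans (le_of_lt hn)⟩

theorem rho_kernel {s : ℝ} (hs : 1 < s) {g : Ed d → ℂ} (hg : IsSCutoff s g)
    (h : ∫⁻ η, ker g η ≤ 1 / 4) {K : ℝ} (hK : 0 < K) :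
    ∃ R : ℝ, 0 ≤ R ∧ ∫⁻ η, ker g η * ENNReal.ofReal (Real.exp (K * rho (1 / s) R ‖η‖)) ≤ 1 / 2 := by
  have hp0 : 0 < 1 / s := by positivity
  have hp1 : 1 / s < 1 := by rw [div_lt_one (by linarith)]; exact hs
  have hkm := measurable_ker (integrable_cut hg)
  have key := tendsto_lintegral_of_dominated_convergence (μ := (volume : Measure (Ed d)))
      (F := fun (n : ℕ) η => ker g η * ENNReal.ofReal (Real.exp (K * rho (1 / s) n ‖η‖)))
      (f := fun η => ker g η)
      (fun η => ker g η * ENNReal.ofReal (Real.exp (K * ‖η‖ ^ (1 / s))))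
      (fun n => ?_) (fun n => Eventually.of_forall fun η => ?_)
      (lintegral_ker_exp hs hg K).ne (Eventually.of_forall fun η => ?_)
  · have hlt : ∫⁻ η, ker g η < 1 / 2 := h.trans_lt (by
      rw [ENNReal.div_lt_iff (by simp) (by simp)]
      have : (1 / 2 : ℝ≥0∞) * 4 = 2 := by
        rw [show (4 : ℝ≥0∞) = 2 * 2 by norm_num, ← mul_assoc, ENNReal.div_mul_cancel (by simp) (by simp), one_mul]
      rw [this]; norm_num)
    obtain ⟨n, hn⟩ := (key.eventually (Iio_mem_nhds hlt)).exists
    exact ⟨n, by positivity, le_of_lt hn⟩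
  · refine hkm.mul (Continuous.measurable ?_).ennreal_ofReal
    unfold rho
    refine Real.continuous_exp.comp (continuous_const.mul (Continuous.sub ?_ continuous_const))
    exact (continuous_const.add continuous_norm).rpow_const (fun _ => Or.inr hp0.le)
  · dsimp only
    gcongr
    exact rho_le_rpow hp0 hp1 (by positivity) (norm_nonneg _)
  · have h1 := (tendsto_rho hp0 hp1 (norm_nonneg η)).comp tendsto_natCast_atTop_atTop
    have h2 : Continuous fun t : ℝ => ENNReal.ofReal (Real.exp (K * t)) :=
      ENNReal.continuous_ofReal.comp (by fun_prop)
    have h3 := (h2.tendsto 0).comp h1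
    have h4 := ENNReal.Tendsto.const_mul (a := ker g η) h3 (Or.inr (by
      unfold ker; exact ENNReal.mul_ne_top ENNReal.ofReal_ne_top enorm_ne_top))
    simpa [Function.comp_def] using h4



theorem FN_add {ω : Ed d → ℝ} (hω : Measurable ω) (q : ℝ≥0∞) (hq : 1 ≤ q) {u w : Ed d → ℂ}
    (hu : Integrable u) (hw : Integrable w) (μ : Measure (Ed d)) :
    FN ω q (fun x => u x + w x) μ ≤ FN ω q u μ + FN ω q w μ := by
  unfold FN
  refine le_trans ?_ (eLpNorm_add_le
    ((measurable_FT hu).mul hω.ennreal_ofReal).aestronglyMeasurable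
    ((measurable_FT hw).mul hω.ennreal_ofReal).aestronglyMeasurable hq)
  apply eLpNorm_mono_enorm
  intro ξ
  simp only [enorm_eq_self, Pi.add_apply, Pi.mul_apply]
  rw [FT_add hu hw, ← add_mul]
  gcongr
  exact enorm_add_le _ _

theorem FN_const_mul {ω : Ed d → ℝ} (hω : ∀ x, 0 < ω x) (q : ℝ≥0∞) (a : ℂ) (u : Ed d → ℂ)
    (μ : Measure (Ed d)) : FN ω q (fun x => a * u x) μ = ‖a‖ₑ * FN ω q u μ := by
  rw [← FN_eq ω hω, ← FN_eq ω hω, ← enorm_norm a, ← eLpNorm_const_smul]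
  congr 1
  ext ξ
  rw [FT_const_mul, norm_mul, Pi.smul_apply, smul_eq_mul, mul_assoc]

theorem FN_weight_le {ω ω' : Ed d → ℝ} (hω : ∀ x, 0 < ω x) (hω' : ∀ x, 0 < ω' x) {b : ℝ}
    (hb : 0 < b) (h : ∀ x, ω x ≤ b * ω' x) (q : ℝ≥0∞) (u : Ed d → ℂ) (μ : Measure (Ed d)) :
    FN ω q u μ ≤ ENNReal.ofReal b * FN ω' q u μ := by
  rw [← FN_eq ω hω, ← FN_eq ω' hω', ← Real.enorm_of_nonneg hb.le, ← eLpNorm_const_smul]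
  apply eLpNorm_mono_real
  intro ξ
  rw [Pi.smul_apply, smul_eq_mul, Real.norm_of_nonneg (mul_nonneg (norm_nonneg _) (hω ξ).le)]
  nlinarith [h ξ, norm_nonneg (FT u ξ)]

theorem continuous_rho {p : ℝ} (hp0 : 0 < p) (R : ℝ) : Continuous (fun x : Ed d => rho p R ‖x‖) := by
  unfold rho
  refine Continuous.sub ?_ continuous_const
  exact (continuous_const.add continuous_norm).rpow_const (fun _ => Or.inr hp0.le)

theorem regularize {s : ℝ} (hs : 1 < s) {k C : ℝ} {ω : Ed d → ℝ} (hω : Tame s k C ω) {R : ℝ}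
    (hR : 0 ≤ R) : ∃ ω' : Ed d → ℝ, Measurable ω' ∧ (∀ x, 0 < ω' x) ∧
      (∀ x y, ω' (x + y) ≤ Real.exp (k * rho (1 / s) R ‖x‖) * ω' y) ∧
      (∀ x, ω x ≤ ω' x) ∧ ∃ b : ℝ, 0 < b ∧ ∀ x, ω' x ≤ b * ω x := by
  have hp0 : 0 < 1 / s := by positivity
  have hp1 : 1 / s < 1 := by rw [div_lt_one (by linarith)]; exact hs
  obtain ⟨hm, hpos, hk, hC, hmod⟩ := hω
  set p := 1 / s with hp
  set b : ℝ := C * Real.exp (k * R ^ p) with hb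
  set h : Ed d → Ed d → ℝ := fun η ξ => ω η * Real.exp (-(k * rho p R ‖ξ - η‖)) with hh
  have hub : ∀ η ξ, h η ξ ≤ b * ω ξ := by
    intro η ξ
    have h1 := hmod (η - ξ) ξ
    rw [sub_add_cancel, norm_sub_rev] at h1
    have h2 := rpow_le_rho_add hp0 hR (norm_nonneg (ξ - η))
    calc h η ξ ≤ (C * Real.exp (k * ‖ξ - η‖ ^ p) * ω ξ) * Real.exp (-(k * rho p R ‖ξ - η‖)) := by
          simp only [hh]; gcongr
      _ = C * Real.exp (k * ‖ξ - η‖ ^ p + -(k * rho p R ‖ξ - η‖)) * ω ξ := by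
          rw [Real.exp_add]; ring
      _ ≤ b * ω ξ := by
          have := hpos ξ
          rw [hb]
          gcongr
          nlinarith
  have hbdd : ∀ ξ, BddAbove (range fun η => h η ξ) := fun ξ =>
    ⟨b * ω ξ, by rintro _ ⟨η, rfl⟩; exact hub η ξ⟩
  have hle : ∀ ξ, ω ξ ≤ ⨆ η, h η ξ := fun ξ => by
    refine le_trans (le_of_eq ?_) (le_ciSup (hbdd ξ) ξ)
    simp [hh, rho]
  refine ⟨fun ξ => ⨆ η, h η ξ, ?_, fun ξ => (hpos ξ).trans_le (hle ξ), ?_, hle, b, by positivity, fun ξ => ciSup_le fun η => hub η ξ⟩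
  · apply LowerSemicontinuous.measurable
    apply lowerSemicontinuous_ciSup hbdd
    intro η
    apply Continuous.lowerSemicontinuous
    exact continuous_const.mul (Real.continuous_exp.comp
      (continuous_const.mul ((continuous_rho hp0 R).comp (by fun_prop))).neg)
  · intro x y
    apply ciSup_le
    intro η
    have h1 := rho_le_add hp0 hp1 hR (norm_nonneg x) (norm_nonneg (x + y - η)) (norm_nonneg (y - η)) (by
      have := norm_sub_le (x + y - η) x
      have e : x + y - η - x = y - η := by abel
      rw [e] at this; linarith)
    have h2 : h η (x + y) ≤ Real.exp (k * rho p R ‖x‖) * h η y := by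
      simp only [hh]
      have := hpos η
      calc ω η * Real.exp (-(k * rho p R ‖x + y - η‖))
          ≤ ω η * Real.exp (k * rho p R ‖x‖ + -(k * rho p R ‖y - η‖)) := by
            gcongr; nlinarith
        _ = _ := by rw [Real.exp_add]; ring
    refine h2.trans ?_
    gcongr
    exact le_ciSup (hbdd y) η

theorem absorb {s : ℝ} (hs : 1 < s) {k C : ℝ} {ω : Ed d → ℝ} (hω : Tame s k C ω) (q : ℝ≥0∞)
    (hq : 1 ≤ q) {g u w : Ed d → ℂ} (hg : IsSCutoff s g) (hu : Integrable u) (hw : Integrable w)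
    (hker : ∫⁻ η, ker g η ≤ 1 / 4) (heq : ∀ x, u x = w x + g x * u x)
    (hfin : FN ω q w volume < ∞) : FN ω q u volume < ∞ := by
  have hp0 : 0 < 1 / s := by positivity
  have hp1 : 1 / s < 1 := by rw [div_lt_one (by linarith)]; exact hs
  have hk : 0 < k := hω.2.2.1
  have hωp := hω.2.1
  obtain ⟨R, hR, hRk⟩ := rho_kernel hs hg hker hk
  obtain ⟨ω', hm', hpos', hmod', hle', b, hb, hub'⟩ := regularize hs hω hR
  set p := 1 / s with hp
  set T : ℕ → Ed d → ℝ := fun n ξ => min (ω' ξ) (((n : ℝ) + 1) * Real.exp (-(k * rho p R ‖ξ‖))) with hT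
  have hTpos : ∀ n ξ, 0 < T n ξ := fun n ξ => lt_min (hpos' ξ) (by positivity)
  have hTm : ∀ n, Measurable (T n) := fun n =>
    hm'.min (Continuous.measurable (continuous_const.mul (Real.continuous_exp.comp
      (continuous_const.mul (continuous_rho hp0 R)).neg)))
  have hTmod : ∀ n x y, T n (x + y) ≤ Real.exp (k * rho p R ‖x‖) * T n y := by
    intro n x y
    simp only [hT]
    rw [mul_min_of_nonneg _ _ (Real.exp_pos _).le]
    apply min_le_min (hmod' x y)
    have h1 := rho_le_add hp0 hp1 hR (norm_nonneg x) (norm_nonneg (x + y)) (norm_nonneg y) (by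
      have := norm_sub_le (x + y) x
      have e : x + y - x = y := by abel
      rw [e] at this; linarith)
    calc ((n : ℝ) + 1) * Real.exp (-(k * rho p R ‖x + y‖))
        ≤ ((n : ℝ) + 1) * Real.exp (k * rho p R ‖x‖ + -(k * rho p R ‖y‖)) := by
          gcongr; nlinarith
      _ = _ := by rw [Real.exp_add]; ring
  have hTfin : ∀ n, FN (T n) q u volume < ∞ := by
    intro n
    set B := cst d * ∫ x, ‖u x‖ with hB
    set c := B * (((n : ℝ) + 1) * Real.exp (k * R ^ p)) with hc
    rw [← FN_eq _ (hTpos n)]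
    have h1 : eLpNorm (fun ξ => ‖FT u ξ‖ * T n ξ) q volume ≤
        eLpNorm (c • fun ξ : Ed d => Real.exp (-k * ‖ξ‖ ^ p)) q volume := by
      apply eLpNorm_mono_real
      intro ξ
      rw [Real.norm_of_nonneg (mul_nonneg (norm_nonneg _) (hTpos n ξ).le)]
      have h2 := rpow_le_rho_add hp0 hR (norm_nonneg ξ)
      calc ‖FT u ξ‖ * T n ξ ≤ B * (((n : ℝ) + 1) * Real.exp (-(k * rho p R ‖ξ‖))) :=
            mul_le_mul (norm_FT_le u ξ) (min_le_right _ _) (hTpos n ξ).le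
              ((norm_nonneg _).trans (norm_FT_le u ξ))
        _ ≤ B * (((n : ℝ) + 1) * Real.exp (k * R ^ p + -k * ‖ξ‖ ^ p)) := by
            have : 0 ≤ B := (norm_nonneg _).trans (norm_FT_le u ξ)
            gcongr
            nlinarith
        _ = _ := by rw [Real.exp_add, Pi.smul_apply, smul_eq_mul, hc]; ring
    refine h1.trans_lt ?_
    rw [eLpNorm_const_smul]
    exact ENNReal.mul_lt_top (by simp) (memLp_exp_neg hp0 hk q hq).2
  set L := FN ω' q w volume with hL
  have hLfin : L < ∞ := (FN_weight_le hpos' hωp hb hub' q w volume).trans_lt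
    (ENNReal.mul_lt_top ENNReal.ofReal_lt_top hfin)
  have hbd : ∀ n, FN (T n) q u volume ≤ 2 * L := by
    intro n
    have h1 : FN (T n) q u volume ≤ FN (T n) q w volume + FN (T n) q (fun x => g x * u x) volume := by
      have := FN_add (hTm n) q hq hw (integrable_cut_mul hg hu) volume
      rwa [← funext heq] at this
    have h2 : FN (T n) q (fun x => g x * u x) volume ≤ 1 / 2 * FN (T n) q u volume := by
      refine (mult_bound hs hg hu (hTm n) (v := fun x => Real.exp (k * rho p R ‖x‖))
        (Continuous.measurable (Real.continuous_exp.comp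
          (continuous_const.mul (continuous_rho hp0 R)))) (fun x => (Real.exp_pos _).le) (hTmod n) q hq).trans ?_
      gcongr
    have h3 : FN (T n) q w volume ≤ L := by
      have := FN_weight_le (hTpos n) hpos' one_pos (fun x => by rw [one_mul]; exact min_le_left _ _) q w volume
      simpa using this
    set a := FN (T n) q u volume with ha
    have hat : a ≠ ∞ := (hTfin n).ne
    have h4 : a ≤ L + 1 / 2 * a := h1.trans (add_le_add h3 h2)
    have h5 : a.toReal ≤ L.toReal + 1 / 2 * a.toReal := by
      have := ENNReal.toReal_mono (ENNReal.add_ne_top.2 ⟨hLfin.ne, ENNReal.mul_ne_top (by simp) hat⟩) h4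
      rw [ENNReal.toReal_add hLfin.ne (ENNReal.mul_ne_top (by simp) hat), ENNReal.toReal_mul] at this
      simpa using this
    rw [← ENNReal.toReal_le_toReal hat (ENNReal.mul_ne_top (by simp) hLfin.ne), ENNReal.toReal_mul]
    simp only [ENNReal.toReal_ofNat]
    linarith
  have hω'fin : FN ω' q u volume ≤ 2 * L := by
    rw [← FN_eq _ hpos']
    refine (Lp.eLpNorm_lim_le_liminf_eLpNorm (f := fun n ξ => ‖FT u ξ‖ * T n ξ) (fun n => ?_) _
      (Eventually.of_forall fun ξ => ?_)).trans ?_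
    · exact ((continuous_FT hu).norm.measurable.mul (hTm n)).aestronglyMeasurable
    · apply tendsto_const_nhds.congr'
      obtain ⟨N, hN⟩ := exists_nat_ge (ω' ξ / Real.exp (-(k * rho p R ‖ξ‖)))
      filter_upwards [eventually_ge_atTop N] with n hn
      simp only [hT]
      rw [min_eq_left]
      rw [div_le_iff₀ (Real.exp_pos _)] at hN
      refine hN.trans ?_
      gcongr
      have : (N : ℝ) ≤ n := by exact_mod_cast hn
      linarith
    · refine liminf_le_of_le (by isBoundedDefault) fun c hc => ?_
      obtain ⟨n, hn⟩ := hc.exists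
      refine hn.trans ?_
      rw [FN_eq _ (hTpos n)]
      exact hbd n
  have := FN_weight_le hωp hpos' one_pos (fun x => by rw [one_mul]; exact hle' x) q u volume
  refine this.trans_lt ?_
  exact ENNReal.mul_lt_top (by simp) (hω'fin.trans_lt (ENNReal.mul_lt_top (by simp) hLfin))

theorem local_lemma {s : ℝ} (hs : 1 < s) {k C : ℝ} {ω : Ed d → ℝ} (hω : Tame s k C ω) (q : ℝ≥0∞)
    (hq : 1 ≤ q) {f : Ed d → ℂ} (hf : Integrable f) {Φ : Ed d → ℂ} (hΦ : IsSCutoff s Φ)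
    (x₀ : Ed d) (hx : Φ x₀ ≠ 0)
    (h : ∀ ψ, IsSCutoff s ψ → FN ω q (fun x => ψ x * (Φ x * f x)) volume < ∞) :
    ∃ ψ, IsSCutoff s ψ ∧ (∃ r : ℝ, 0 < r ∧ ∀ x, ‖x - x₀‖ < r → ψ x = 1) ∧
      FN ω q (fun x => ψ x * f x) volume < ∞ := by
  obtain ⟨χ, hχ, r, hr, hχ1⟩ := exists_cut hs d
  set Φ' : Ed d → ℂ := fun x => (Φ x₀)⁻¹ * Φ x with hΦ'def
  have hΦ' : IsSCutoff s Φ' := cut_const_mul _ hΦ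
  obtain ⟨ε, hε, hker⟩ := small_kernel hs hχ hΦ' x₀ (by simp [hΦ'def, hx])
  obtain ⟨B, hB⟩ := hχ.2.1.isCompact.isBounded.exists_norm_le
  set B' := max B 0 + 1 with hB'
  have hB'0 : 0 < B' := by positivity
  set ε' := ε * r / B' with hε'
  have hε'0 : 0 < ε' := by positivity
  set ψ : Ed d → ℂ := fun x => χ (ε'⁻¹ • (x - x₀)) with hψdef
  have hψ : IsSCutoff s ψ := cut_scale hs hχ hε'0 x₀
  refine ⟨ψ, hψ, ⟨ε' * r, by positivity, fun x hx => ?_⟩, ?_⟩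
  · apply hχ1
    rw [norm_smul, norm_inv, Real.norm_of_nonneg hε'0.le, ← div_eq_inv_mul, div_lt_iff₀ hε'0]
    linarith
  · refine absorb hs hω q hq (g := rem χ Φ' x₀ ε) (w := fun x => ((Φ x₀)⁻¹ * ψ x) * (Φ x * f x))
      (cut_rem hs hχ hΦ' x₀ hε) (integrable_cut_mul hψ hf)
      (integrable_cut_mul (cut_const_mul _ hψ) (integrable_cut_mul hΦ hf)) hker (fun x => ?_)
      (h _ (cut_const_mul _ hψ))
    by_cases h0 : ψ x = 0
    · simp [h0]
    · have h1 : ‖ε'⁻¹ • (x - x₀)‖ ≤ B := hB _ (subset_tsupport _ h0)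
      have h2 : χ (ε⁻¹ • (x - x₀)) = 1 := by
        apply hχ1
        rw [norm_smul, norm_inv, Real.norm_of_nonneg hε'0.le, ← div_eq_inv_mul, div_le_iff₀ hε'0] at h1
        rw [norm_smul, norm_inv, Real.norm_of_nonneg hε.le, ← div_eq_inv_mul, div_lt_iff₀ hε]
        have h3 : B < B' := by rw [hB']; linarith [le_max_left B 0]
        calc _ ≤ B * ε' := h1
          _ < B' * ε' := by gcongr
          _ = r * ε := by rw [hε']; field_simp
      simp only [rem, h2, hΦ'def]
      ring



/-- The conical set generated by directions in `S`. -/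
def Co (S : Set (Ed d)) : Set (Ed d) := {ξ | ξ ≠ 0 ∧ ‖ξ‖⁻¹ • ξ ∈ S}

theorem FN_mono_measure {ω : Ed d → ℝ} {q : ℝ≥0∞} {u : Ed d → ℂ} {μ ν : Measure (Ed d)} (h : μ ≤ ν) :
    FN ω q u μ ≤ FN ω q u ν := eLpNorm_mono_measure _ h

theorem FN_union {ω : Ed d → ℝ} {q : ℝ≥0∞} (hq : 1 ≤ q) {u : Ed d → ℂ} (S T : Set (Ed d))
    (hS : FN ω q u (volume.restrict S) < ∞) (hT : FN ω q u (volume.restrict T) < ∞) :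
    FN ω q u (volume.restrict (S ∪ T)) < ∞ := by
  refine (FN_mono_measure (Measure.restrict_union_le S T)).trans_lt ?_
  unfold FN at *
  by_cases hqt : q = ∞
  · subst hqt
    simp only [eLpNorm_exponent_top] at *
    refine lt_of_le_of_lt ?_ (max_lt hS hT)
    unfold eLpNormEssSup
    refine essSup_le_of_ae_le _ ?_
    rw [EventuallyLE, ae_add_measure_iff]
    constructor
    · filter_upwards [ae_le_essSup (f := fun ξ => ‖‖FT u ξ‖ₑ * ENNReal.ofReal (ω ξ)‖ₑ) (μ := volume.restrict S)] with ξ h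
      exact h.trans (le_max_left _ _)
    · filter_upwards [ae_le_essSup (f := fun ξ => ‖‖FT u ξ‖ₑ * ENNReal.ofReal (ω ξ)‖ₑ) (μ := volume.restrict T)] with ξ h
      exact h.trans (le_max_right _ _)
  · have hq0 : q ≠ 0 := (one_pos.trans_le hq).ne'
    rw [eLpNorm_lt_top_iff_lintegral_rpow_enorm_lt_top hq0 hqt] at *
    rw [lintegral_add_measure]
    exact ENNReal.add_lt_top.2 ⟨hS, hT⟩

theorem FN_zero_set {ω : Ed d → ℝ} (hω : ∀ x, 0 < ω x) {q : ℝ≥0∞} (u : Ed d → ℂ) :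
    FN ω q u (volume.restrict {0}) < ∞ := by
  rw [← FN_eq ω hω]
  have : eLpNorm (fun ξ => ‖FT u ξ‖ * ω ξ) q (volume.restrict {(0 : Ed d)}) =
      eLpNorm (fun _ : Ed d => ‖FT u 0‖ * ω 0) q (volume.restrict {(0 : Ed d)}) := by
    apply eLpNorm_congr_ae
    filter_upwards [ae_restrict_mem (measurableSet_singleton (0 : Ed d))] with ξ hξ
    rw [mem_singleton_iff.1 hξ]
  rw [this]
  have hfin : IsFiniteMeasure (volume.restrict {(0 : Ed d)}) :=
    ⟨by rw [Measure.restrict_apply_univ]; exact isCompact_singleton.measure_lt_top⟩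
  exact (memLp_const _).2

theorem pointwise_cut {s : ℝ} (hs : 1 < s) {k C : ℝ} {ω : Ed d → ℝ} (hω : Tame s k C ω) (q : ℝ≥0∞)
    (hq : 1 ≤ q) {f : Ed d → ℂ} (hf : Integrable f) (x₀ : Ed d)
    (h : ∀ ξ₀ : Ed d, ξ₀ ≠ 0 → ∃ φ, IsSCutoff s φ ∧ φ x₀ ≠ 0 ∧ ∃ Γ : Set (Ed d), IsOpen Γ ∧ IsCone Γ ∧
      ξ₀ ∈ Γ ∧ FN ω q (fun x => φ x * f x) (volume.restrict Γ) < ∞) :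
    ∃ Φ, IsSCutoff s Φ ∧ Φ x₀ ≠ 0 ∧
      ∀ ψ, IsSCutoff s ψ → FN ω q (fun x => ψ x * (Φ x * f x)) volume < ∞ := by
  have main : ∃ Φ, IsSCutoff s Φ ∧ Φ x₀ ≠ 0 ∧
      ∀ ψ, IsSCutoff s ψ → FN ω q (fun x => ψ x * (Φ x * f x))
        (volume.restrict (Co (Metric.sphere (0 : Ed d) 1))) < ∞ := by
    refine IsCompact.induction_on (isCompact_sphere (0 : Ed d) 1)
      (p := fun S => ∃ Φ, IsSCutoff s Φ ∧ Φ x₀ ≠ 0 ∧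
      ∀ ψ, IsSCutoff s ψ → FN ω q (fun x => ψ x * (Φ x * f x)) (volume.restrict (Co S)) < ∞)
      ?_ ?_ ?_ ?_
    · obtain ⟨χ, hχ, r, hr, hχ1⟩ := exists_cut hs d
      refine ⟨_, cut_scale hs hχ one_pos x₀, ?_, fun ψ hψ => ?_⟩
      · rw [hχ1 _ (by simpa using hr)]; simp
      · have : Co (∅ : Set (Ed d)) = ∅ := by ext; simp [Co]
        simp [FN, this]
    · rintro S T hST ⟨Φ, hΦ, h0, hfin⟩
      refine ⟨Φ, hΦ, h0, fun ψ hψ => (FN_mono_measure ?_).trans_lt (hfin ψ hψ)⟩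
      have hsub : Co S ⊆ Co T := fun ξ hξ => ⟨hξ.1, hST hξ.2⟩
      exact Measure.restrict_mono hsub le_rfl
    · rintro S T ⟨Φ, hΦ, h0, hfin⟩ ⟨Φ', hΦ', h0', hfin'⟩
      refine ⟨_, cut_mul hs hΦ hΦ', mul_ne_zero h0 h0', fun ψ hψ => ?_⟩
      have e : Co (S ∪ T) = Co S ∪ Co T := by
        ext ξ; simp only [Co, mem_ofPred_eq, mem_union]; tauto
      rw [e]
      apply FN_union hq
      · have e1 : (fun x => ψ x * (Φ x * Φ' x * f x)) = fun x => (ψ x * Φ' x) * (Φ x * f x) := by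
          ext x; ring
        rw [e1]; exact hfin _ (cut_mul hs hψ hΦ')
      · have e1 : (fun x => ψ x * (Φ x * Φ' x * f x)) = fun x => (ψ x * Φ x) * (Φ' x * f x) := by
          ext x; ring
        rw [e1]; exact hfin' _ (cut_mul hs hψ hΦ)
    · intro ξ₀ hξ₀
      obtain ⟨φ, hφ, h0, Γ, hΓo, hΓc, hξΓ, hfin⟩ := h ξ₀ (by
        rintro rfl; simp at hξ₀)
      obtain ⟨δ, hδ, hball⟩ := Metric.isOpen_iff.1 hΓo ξ₀ hξΓ
      refine ⟨Metric.ball ξ₀ (δ / 2), mem_nhdsWithin_of_mem_nhds (Metric.ball_mem_nhds _ (by positivity)),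
        φ, hφ, h0, fun ψ hψ => ?_⟩
      refine cone_finite hs hψ (integrable_cut_mul hφ hf) hω q hq hΓo.measurableSet
        (δ := δ / 2) (by positivity) ?_ hfin
      rintro ξ ⟨hξ0, hξS⟩ η hη
      by_contra hlt
      rw [not_le] at hlt
      apply hη
      have hn : 0 < ‖ξ‖ := norm_pos_iff.2 hξ0
      have hmem : ‖ξ‖⁻¹ • η ∈ Γ := by
        apply hball
        rw [Metric.mem_ball]
        have h1 : dist (‖ξ‖⁻¹ • η) (‖ξ‖⁻¹ • ξ) < δ / 2 := by
          rw [dist_smul₀, norm_inv, norm_norm, dist_comm, dist_eq_norm, ← div_eq_inv_mul, div_lt_iff₀ hn]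
          exact hlt
        have h2 := dist_triangle (‖ξ‖⁻¹ • η) (‖ξ‖⁻¹ • ξ) ξ₀
        rw [Metric.mem_ball] at hξS
        linarith
      have := hΓc.2 _ hmem ‖ξ‖ hn
      rwa [smul_smul, mul_inv_cancel₀ hn.ne', one_smul] at this
  obtain ⟨Φ, hΦ, h0, hfin⟩ := main
  refine ⟨Φ, hΦ, h0, fun ψ hψ => ?_⟩
  have h1 := FN_union hq _ _ (hfin ψ hψ) (FN_zero_set hω.2.1 (fun x => ψ x * (Φ x * f x)))
  have h2 : Co (Metric.sphere (0 : Ed d) 1) ∪ {0} = univ := by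
    ext ξ
    simp only [Co, mem_union, mem_ofPred_eq, mem_singleton_iff, mem_univ, iff_true]
    by_cases hξ : ξ = 0
    · exact Or.inr hξ
    · left
      refine ⟨hξ, ?_⟩
      rw [mem_sphere_zero_iff_norm, norm_smul, norm_inv, norm_norm, inv_mul_cancel₀ (norm_ne_zero_iff.2 hξ)]
  rwa [h2, Measure.restrict_univ] at h1

theorem glue {s : ℝ} (hs : 1 < s) {k C : ℝ} {ω : Ed d → ℝ} (hω : Tame s k C ω) (q : ℝ≥0∞)
    (hq : 1 ≤ q) {f : Ed d → ℂ} (hf : Integrable f) (hfc : HasCompactSupport f)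
    (h : ∀ x₀ : Ed d, ∃ ψ, IsSCutoff s ψ ∧ (∃ r : ℝ, 0 < r ∧ ∀ x, ‖x - x₀‖ < r → ψ x = 1) ∧
      FN ω q (fun x => ψ x * f x) volume < ∞) : FN ω q f volume < ∞ := by
  have main : ∃ θ, IsSCutoff s θ ∧ (∀ x ∈ tsupport f, θ x = 1) ∧
      FN ω q (fun x => θ x * f x) volume < ∞ := by
    refine IsCompact.induction_on hfc.isCompact
      (p := fun S => ∃ θ, IsSCutoff s θ ∧ (∀ x ∈ S, θ x = 1) ∧
      FN ω q (fun x => θ x * f x) volume < ∞) ?_ ?_ ?_ ?_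
    · obtain ⟨ψ, hψ, -, h2⟩ := h 0
      exact ⟨ψ, hψ, by simp, h2⟩
    · rintro S T hST ⟨θ, hθ, h1, h2⟩
      exact ⟨θ, hθ, fun x hx => h1 x (hST hx), h2⟩
    · rintro S T ⟨θ, hθ, h1, h2⟩ ⟨θ', hθ', h1', h2'⟩
      have hc := cut_add hθ (cut_add hθ' (cut_const_mul (-1) (cut_mul hs hθ hθ')))
      refine ⟨_, hc, ?_, ?_⟩
      · rintro x (hx | hx)
        · simp only [h1 x hx]; ring
        · simp only [h1' x hx]; ring
      · have i1 := integrable_cut_mul hθ hf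
        have i2 := integrable_cut_mul hθ' hf
        have i3 := integrable_cut_mul (cut_const_mul (-1) hθ) i2
        have e : (fun x => (θ x + (θ' x + -1 * (θ x * θ' x))) * f x) =
            fun x => θ x * f x + (θ' x * f x + (-1 * θ x) * (θ' x * f x)) := by
          ext x; ring
        rw [e]
        refine (FN_add hω.1 q hq i1 (i2.add i3) volume).trans_lt (ENNReal.add_lt_top.2 ⟨h2, ?_⟩)
        refine (FN_add hω.1 q hq i2 i3 volume).trans_lt (ENNReal.add_lt_top.2 ⟨h2', ?_⟩)
        exact mult_finite hs (cut_const_mul (-1) hθ) i2 hω q hq h2'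
    · intro x₀ _
      obtain ⟨ψ, hψ, ⟨r, hr, h1⟩, h2⟩ := h x₀
      refine ⟨Metric.ball x₀ r, mem_nhdsWithin_of_mem_nhds (Metric.ball_mem_nhds _ hr), ψ, hψ, ?_, h2⟩
      intro x hx
      exact h1 x (by rwa [Metric.mem_ball, dist_eq_norm] at hx)
  obtain ⟨θ, hθ, h1, h2⟩ := main
  have e : (fun x => θ x * f x) = f := by
    ext x
    by_cases hx : x ∈ tsupport f
    · rw [h1 x hx, one_mul]
    · rw [image_eq_zero_of_notMem_tsupport hx, mul_zero]
  rwa [e] at h2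

theorem stmt16 {d : ℕ} (s : ℝ) (hs : 1 < s) (q : ℝ≥0∞) (hq : 1 ≤ q)
    (ω : EuclideanSpace ℝ (Fin d) → ℝ) (hω : IsSAdmissible s ω)
    (f : EuclideanSpace ℝ (Fin d) → ℂ) (hf : Integrable f) (hfc : HasCompactSupport f) :
    eLpNorm (fun ξ => ‖FT f ξ‖ * ω ξ) q volume < ∞ ↔ WF_FL s q ω f = ∅ := by
  obtain ⟨k, C, ht⟩ := tame_of_admissible hω
  have hpos := hω.2.1
  rw [FN_eq ω hpos]
  constructor
  · intro h
    rw [eq_empty_iff_forall_notMem]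
    rintro ⟨x₀, ξ₀⟩ ⟨hξ, hz⟩
    obtain ⟨χ, hχ, r, hr, hχ1⟩ := exists_cut hs d
    have hc := cut_scale hs hχ one_pos x₀
    have h1 := hz _ hc (by
        show χ ((1:ℝ)⁻¹ • (x₀ - x₀)) ≠ 0
        rw [hχ1 _ (by simpa using hr)]; simp) {0}ᶜ isOpen_compl_singleton
      ⟨by simp, fun ξ hξ t ht => by
        simp only [mem_compl_iff, mem_singleton_iff] at *
        exact smul_ne_zero ht.ne' hξ⟩ hξ
    unfold FLSemi at h1
    rw [FN_eq ω hpos] at h1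
    have h2 := mult_finite hs hc hf ht q hq h
    exact ((FN_mono_measure Measure.restrict_le_self).trans_lt h2).ne h1
  · intro h
    refine glue hs ht q hq hf hfc fun x₀ => ?_
    obtain ⟨Φ, hΦ, h0, hfin⟩ := pointwise_cut hs ht q hq hf x₀ (by
      intro ξ₀ hξ₀
      by_contra hcon
      have : (x₀, ξ₀) ∈ WF_FL s q ω f := by
        refine ⟨hξ₀, fun φ hφ hφ0 Γ hΓo hΓc hΓ => ?_⟩
        by_contra hne
        apply hcon
        refine ⟨φ, hφ, hφ0, Γ, hΓo, hΓc, hΓ, ?_⟩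
        rw [← FN_eq ω hpos]
        exact lt_top_iff_ne_top.2 hne
      rw [h] at this
      exact this)
    exact local_lemma hs ht q hq hf hΦ x₀ h0 hfin

end Paper
end
end

section
/- Let φ, φ₁ be Schwartz functions on ℝ^d and let F ∈ L¹(ℝ^{2d}). Define V*_φ F(t) = (2π)^{−d/2} ∬_{ℝ^{2d}} F(x,ξ)·e^{i⟨ξ,t⟩}·φ(t−x) dx dξ, a bounded continuous function of t ∈ ℝ^d. Then for all (x, ξ) ∈ ℝ^{2d}: |V_{φ₁}(V*_φ F)(x,ξ)| ≤ (2π)^{−d/2}·(|F| * |V_{φ₁}φ|)(x,ξ), where * denotes convolution on ℝ^{2d}. -/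
open MeasureTheory Complex Set
open scoped ENNReal RealInnerProductSpace NNReal

noncomputable section

namespace Paper

variable {d : ℕ}

/-- Integrability of the joint integrand, used for Fubini. -/
theorem aux_integrable {d : ℕ} (φ φ₁ : SchwartzMap (EuclideanSpace ℝ (Fin d)) ℂ)
    (F : EuclideanSpace ℝ (Fin d) × EuclideanSpace ℝ (Fin d) → ℂ) (hF : Integrable F)
    (x ξ : EuclideanSpace ℝ (Fin d)) :
    Integrable (fun p : EuclideanSpace ℝ (Fin d) ×
        (EuclideanSpace ℝ (Fin d) × EuclideanSpace ℝ (Fin d)) =>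
      ((starRingEnd ℂ) (φ₁ (p.1 - x)) * F p.2) *
        (Complex.exp ((⟪p.2.2, p.1⟫ : ℝ) * Complex.I) * φ (p.1 - p.2.1) *
        Complex.exp (-(⟪ξ, p.1⟫ : ℝ) * Complex.I)))
      (volume.prod volume) := by
  have h1 : Integrable (fun y => (starRingEnd ℂ) (φ₁ (y - x))) :=
    Integrable.congr' (φ₁.integrable.comp_sub_right x) (by
      have := φ₁.continuous
      exact Continuous.aestronglyMeasurable (by fun_prop)) (Filter.Eventually.of_forall fun y => by simp)
  have h2 := h1.mul_prod hF
  obtain ⟨C, hC⟩ : ∃ C, ∀ y, ‖φ y‖ ≤ C :=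
    ⟨_, fun y => SchwartzMap.norm_le_seminorm ℝ φ y⟩
  refine h2.mul_bdd (c := C) ?_ ?_
  · have := φ.continuous
    exact Continuous.aestronglyMeasurable (by fun_prop)
  · refine Filter.Eventually.of_forall fun p => ?_
    rw [norm_mul, norm_mul, ← Complex.ofReal_neg, Complex.norm_exp_ofReal_mul_I,
      Complex.norm_exp_ofReal_mul_I]
    simpa using hC _

/-- Covariance of the inner integral. -/
theorem aux_inner {d : ℕ} (φ φ₁ : EuclideanSpace ℝ (Fin d) → ℂ)
    (a : ℂ) (z x ξ : EuclideanSpace ℝ (Fin d)) (η : EuclideanSpace ℝ (Fin d)) :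
    ‖((2 * Real.pi) ^ (-(d : ℝ) / 2) : ℝ) * ∫ y, ((starRingEnd ℂ) (φ₁ (y - x)) * a) *
        (Complex.exp ((⟪η, y⟫ : ℝ) * Complex.I) * φ (y - z) *
        Complex.exp (-(⟪ξ, y⟫ : ℝ) * Complex.I))‖ =
      ‖a‖ * ‖STFT φ₁ φ (x - z) (ξ - η)‖ := by
  rw [← integral_add_right_eq_self _ z]
  have : ∀ y, ((starRingEnd ℂ) (φ₁ (y + z - x)) * a) *
        (Complex.exp ((⟪η, y + z⟫ : ℝ) * Complex.I) * φ (y + z - z) *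
        Complex.exp (-(⟪ξ, y + z⟫ : ℝ) * Complex.I)) =
      (a * Complex.exp ((-⟪ξ - η, z⟫ : ℝ) * Complex.I)) *
      (φ y * (starRingEnd ℂ) (φ₁ (y - (x - z))) *
        Complex.exp (-(⟪ξ - η, y⟫ : ℝ) * Complex.I)) := by
    intro y
    have e : Complex.exp ((⟪η, y + z⟫ : ℝ) * Complex.I) *
        Complex.exp (-(⟪ξ, y + z⟫ : ℝ) * Complex.I) =
        Complex.exp ((-⟪ξ - η, z⟫ : ℝ) * Complex.I) *
        Complex.exp (-(⟪ξ - η, y⟫ : ℝ) * Complex.I) := by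
      rw [← Complex.exp_add, ← Complex.exp_add]
      congr 1
      simp only [inner_add_right, inner_sub_left]
      push_cast
      ring
    have e1 : y + z - x = y - (x - z) := by abel
    rw [e1, add_sub_cancel_right]
    linear_combination ((starRingEnd ℂ) (φ₁ (y - (x - z))) * a * φ y) * e
  simp_rw [this]
  rw [integral_const_mul, STFT, norm_mul, norm_mul, norm_mul, norm_mul,
    Complex.norm_exp_ofReal_mul_I]
  ring

theorem stmt17 {d : ℕ} (φ φ₁ : SchwartzMap (EuclideanSpace ℝ (Fin d)) ℂ)
    (F : EuclideanSpace ℝ (Fin d) × EuclideanSpace ℝ (Fin d) → ℂ) (hF : Integrable F)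
    (x ξ : EuclideanSpace ℝ (Fin d)) :
    ENNReal.ofReal ‖STFT (⇑φ₁) (VStar (⇑φ) F) x ξ‖ ≤
      ENNReal.ofReal ((2 * Real.pi) ^ (-(d : ℝ) / 2)) *
        ∫⁻ z : EuclideanSpace ℝ (Fin d) × EuclideanSpace ℝ (Fin d),
          ENNReal.ofReal (‖F z‖ * ‖STFT (⇑φ₁) (⇑φ) (x - z.1) (ξ - z.2)‖) := by
  set c : ℝ := (2 * Real.pi) ^ (-(d : ℝ) / 2) with hc
  have hc0 : 0 ≤ c := by positivity
  have key : STFT (⇑φ₁) (VStar (⇑φ) F) x ξ = c * ∫ z, (c * ∫ y,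
      ((starRingEnd ℂ) (φ₁ (y - x)) * F z) *
        (Complex.exp ((⟪z.2, y⟫ : ℝ) * Complex.I) * φ (y - z.1) *
        Complex.exp (-(⟪ξ, y⟫ : ℝ) * Complex.I))) := by
    rw [integral_const_mul, ← integral_integral_swap (aux_integrable φ φ₁ F hF x ξ),
      ← integral_const_mul, STFT]
    congr 1
    refine integral_congr_ae (Filter.Eventually.of_forall fun y => ?_)
    simp only [VStar]
    rw [mul_assoc, mul_assoc, ← integral_mul_const]
    congr 1
    refine integral_congr_ae (Filter.Eventually.of_forall fun z => ?_)
    simp only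
    ring
  rw [key, norm_mul, Complex.norm_real, Real.norm_of_nonneg hc0, ENNReal.ofReal_mul hc0]
  gcongr
  rw [ofReal_norm]
  refine (enorm_integral_le_lintegral_enorm _).trans (le_of_eq ?_)
  refine lintegral_congr fun z => ?_
  rw [← ofReal_norm, aux_inner]

end Paper
end
end

section
/- Let s > 1, p ∈ [1,∞], let ω : ℝ^{2d} → (0,∞) be measurable and v-moderate with constant C₁ (ω(z+w) ≤ C₁·v(z)·ω(w) for all z, w ∈ ℝ^{2d}), where v : ℝ^{2d} → (0,∞) is even, submultiplicative and satisfies v(z) ≤ C₀·exp(k₀·|z|^{1/s}). Let φ, φ₁ be Schwartz functions on ℝ^d and let F ∈ L¹(ℝ^{2d}) with ‖F·ω‖_{L^p(ℝ^{2d})} < ∞. Then ‖V_{φ₁}(V*_φ F)·ω‖_{L^p(ℝ^{2d})} ≤ (2π)^{−d/2}·C₁·‖ |V_{φ₁}φ|·v ‖_{L¹(ℝ^{2d})}·‖F·ω‖_{L^p(ℝ^{2d})}. -/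
open MeasureTheory Complex Set
open scoped ENNReal RealInnerProductSpace NNReal

noncomputable section

namespace Paper

variable {d : ℕ}

/-- Pointwise Hölder estimate behind Young's inequality. -/
lemma young_pt {α : Type*} [MeasurableSpace α] (μ : Measure α) {g f : α → ℝ≥0∞}
    (hg : Measurable g) (hf : Measurable f) {r : ℝ} (hr : 1 ≤ r) :
    (∫⁻ z, g z * f z ∂μ) ^ r ≤ (∫⁻ z, g z ∂μ) ^ (r - 1) * ∫⁻ z, g z * f z ^ r ∂μ := by
  rcases hr.eq_or_lt with rfl | hr
  · simp
  have hpq : r.HolderConjugate (Real.conjExponent r) := Real.HolderConjugate.conjExponent hr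
  set q := Real.conjExponent r with hq
  have hr0 : 0 < r := hpq.pos
  have hq0 : 0 < q := hpq.symm.pos
  have h := ENNReal.lintegral_mul_le_Lp_mul_Lq μ hpq.symm
    (f := fun z => g z ^ (1 / q)) (g := fun z => g z ^ (1 / r) * f z)
    (hg.pow_const _).aemeasurable ((hg.pow_const _).mul hf).aemeasurable
  have e1 : ∀ z, ((fun z => g z ^ (1 / q)) * (fun z => g z ^ (1 / r) * f z)) z = g z * f z := by
    intro z
    simp only [Pi.mul_apply]
    rw [← mul_assoc, ← ENNReal.rpow_add_of_nonneg _ _ (by positivity) (by positivity)]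
    have : 1 / q + 1 / r = 1 := by
      have := hpq.inv_add_inv_eq_one
      rw [one_div, one_div]; linarith
    rw [this, ENNReal.rpow_one]
  have e2 : ∀ z, (g z ^ (1 / q)) ^ q = g z := by
    intro z
    rw [← ENNReal.rpow_mul, one_div_mul_cancel hq0.ne', ENNReal.rpow_one]
  have e3 : ∀ z, (g z ^ (1 / r) * f z) ^ r = g z * f z ^ r := by
    intro z
    rw [ENNReal.mul_rpow_of_nonneg _ _ hr0.le, ← ENNReal.rpow_mul,
      one_div_mul_cancel hr0.ne', ENNReal.rpow_one]
  simp only [e1, e2, e3] at h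
  calc (∫⁻ z, g z * f z ∂μ) ^ r
      ≤ ((∫⁻ z, g z ∂μ) ^ (1 / q) * (∫⁻ z, g z * f z ^ r ∂μ) ^ (1 / r)) ^ r :=
        ENNReal.rpow_le_rpow h hr0.le
    _ = _ := by
        rw [ENNReal.mul_rpow_of_nonneg _ _ hr0.le, ← ENNReal.rpow_mul, ← ENNReal.rpow_mul,
          one_div_mul_cancel hr0.ne', ENNReal.rpow_one]
        congr 2
        have := hpq.inv_add_inv_eq_one
        field_simp at this ⊢
        linarith

/-- Young's inequality `L¹ * L^p ⊆ L^p` for `ℝ≥0∞`-valued functions. -/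
lemma young_s18 {G : Type*} [MeasurableSpace G] [AddCommGroup G] [MeasurableAdd₂ G] [MeasurableNeg G]
    (μ : Measure G) [SFinite μ] [μ.IsAddLeftInvariant] [μ.IsNegInvariant]
    {g f : G → ℝ≥0∞} (hg : Measurable g) (hf : Measurable f) {p : ℝ≥0∞} (hp : 1 ≤ p) :
    eLpNorm (fun w => ∫⁻ z, g (w - z) * f z ∂μ) p μ ≤ (∫⁻ z, g z ∂μ) * eLpNorm f p μ := by
  have hsub : ∀ w, ∫⁻ z, g (w - z) ∂μ = ∫⁻ z, g z ∂μ := fun w =>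
    lintegral_sub_left_eq_self g w
  have hgm : ∀ w, Measurable fun z => g (w - z) := fun w => by fun_prop
  by_cases htop : p = ∞
  · subst htop
    rw [eLpNorm_exponent_top, eLpNorm_exponent_top]
    refine eLpNormEssSup_le_of_ae_enorm_bound (Filter.Eventually.of_forall fun w => ?_)
    rw [enorm_eq_self, ← hsub w, ← lintegral_mul_const _ (hgm w)]
    refine lintegral_mono_ae ?_
    filter_upwards [enorm_ae_le_eLpNormEssSup f μ] with z hz
    rw [enorm_eq_self] at hz
    gcongr
  have hp0 : p ≠ 0 := (zero_lt_one.trans_le hp).ne'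
  have hr : 1 ≤ p.toReal := by
    rw [← ENNReal.toReal_one]; exact ENNReal.toReal_mono htop hp
  rw [eLpNorm_eq_lintegral_rpow_enorm_toReal hp0 htop, eLpNorm_eq_lintegral_rpow_enorm_toReal hp0 htop]
  simp only [enorm_eq_self]
  set r := p.toReal
  have hr0 : 0 < r := by linarith
  have key : ∫⁻ w, (∫⁻ z, g (w - z) * f z ∂μ) ^ r ∂μ
      ≤ (∫⁻ z, g z ∂μ) ^ r * ∫⁻ z, f z ^ r ∂μ := by
    have hm : Measurable (fun q : G × G => g (q.1 - q.2) * f q.2 ^ r) := by fun_prop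
    calc ∫⁻ w, (∫⁻ z, g (w - z) * f z ∂μ) ^ r ∂μ
        ≤ ∫⁻ w, (∫⁻ z, g z ∂μ) ^ (r - 1) * ∫⁻ z, g (w - z) * f z ^ r ∂μ ∂μ := by
          refine lintegral_mono fun w => ?_
          have := young_pt μ (hgm w) hf hr
          rwa [hsub w] at this
      _ = (∫⁻ z, g z ∂μ) ^ (r - 1) * ∫⁻ w, ∫⁻ z, g (w - z) * f z ^ r ∂μ ∂μ :=
          lintegral_const_mul _ hm.lintegral_prod_right'
      _ = (∫⁻ z, g z ∂μ) ^ (r - 1) * ∫⁻ z, ∫⁻ w, g (w - z) * f z ^ r ∂μ ∂μ := by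
          rw [lintegral_lintegral_swap hm.aemeasurable]
      _ = (∫⁻ z, g z ∂μ) ^ (r - 1) * ∫⁻ z, (∫⁻ w, g w ∂μ) * f z ^ r ∂μ := by
          congr 1
          refine lintegral_congr fun z => ?_
          rw [lintegral_mul_const _ (by fun_prop), lintegral_sub_right_eq_self g z]
      _ = (∫⁻ z, g z ∂μ) ^ r * ∫⁻ z, f z ^ r ∂μ := by
          rw [lintegral_const_mul _ (by fun_prop), ← mul_assoc]
          congr 1
          nth_rewrite 2 [← ENNReal.rpow_one (∫⁻ z, g z ∂μ)]
          rw [← ENNReal.rpow_add_of_nonneg _ _ (by linarith) zero_le_one]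
          congr 1; ring
  calc _ ≤ ((∫⁻ z, g z ∂μ) ^ r * ∫⁻ z, f z ^ r ∂μ) ^ (1 / r) :=
        ENNReal.rpow_le_rpow key (by positivity)
    _ = _ := by
        rw [ENNReal.mul_rpow_of_nonneg _ _ (by positivity), ← ENNReal.rpow_mul,
          mul_one_div_cancel hr0.ne', ENNReal.rpow_one]

lemma stft_meas (φ φ₁ : SchwartzMap (EuclideanSpace ℝ (Fin d)) ℂ) :
    StronglyMeasurable (fun z : EuclideanSpace ℝ (Fin d) × EuclideanSpace ℝ (Fin d) =>
      STFT (⇑φ₁) (⇑φ) z.1 z.2) := by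
  unfold STFT
  refine StronglyMeasurable.const_mul ?_ _
  have hc : Continuous (fun q : (EuclideanSpace ℝ (Fin d) × EuclideanSpace ℝ (Fin d)) ×
      EuclideanSpace ℝ (Fin d) => φ q.2 * (starRingEnd ℂ) (φ₁ (q.2 - q.1.1)) *
        Complex.exp (-(⟪q.1.2, q.2⟫ : ℝ) * Complex.I)) := by
    have h1 := φ.continuous
    have h2 := φ₁.continuous
    have h3 : Continuous (starRingEnd ℂ) := Complex.continuous_conj
    fun_prop
  exact hc.stronglyMeasurable.integral_prod_right'

/-- The inner integral is a phase times a translated STFT. -/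
lemma inner_int (φ φ₁ : EuclideanSpace ℝ (Fin d) → ℂ) (x ξ a b : EuclideanSpace ℝ (Fin d)) :
    ‖((2 * Real.pi) ^ (-(d : ℝ) / 2) : ℝ) *
      ∫ y, Complex.exp ((⟪b, y⟫ : ℝ) * Complex.I) * φ (y - a) *
      (starRingEnd ℂ) (φ₁ (y - x)) * Complex.exp (-(⟪ξ, y⟫ : ℝ) * Complex.I)‖
    = ‖STFT φ₁ φ (x - a) (ξ - b)‖ := by
  unfold STFT
  rw [norm_mul, norm_mul]
  congr 1
  rw [← integral_add_right_eq_self _ a]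
  have : ∀ y, Complex.exp ((⟪b, y + a⟫ : ℝ) * Complex.I) * φ (y + a - a) *
      (starRingEnd ℂ) (φ₁ (y + a - x)) * Complex.exp (-(⟪ξ, y + a⟫ : ℝ) * Complex.I)
      = Complex.exp ((⟪b - ξ, a⟫ : ℝ) * Complex.I) *
        (φ y * (starRingEnd ℂ) (φ₁ (y - (x - a))) *
          Complex.exp (-(⟪ξ - b, y⟫ : ℝ) * Complex.I)) := by
    intro y
    have e : Complex.exp ((⟪b, y + a⟫ : ℝ) * Complex.I) *
        Complex.exp (-(⟪ξ, y + a⟫ : ℝ) * Complex.I) =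
        Complex.exp ((⟪b - ξ, a⟫ : ℝ) * Complex.I) *
          Complex.exp (-(⟪ξ - b, y⟫ : ℝ) * Complex.I) := by
      rw [← Complex.exp_add, ← Complex.exp_add]
      congr 1
      simp only [inner_add_right, inner_sub_left]
      push_cast
      ring
    rw [add_sub_cancel_right, show y + a - x = y - (x - a) by abel]
    linear_combination φ y * (starRingEnd ℂ) (φ₁ (y - (x - a))) * e
  simp only [this]
  rw [integral_const_mul, norm_mul, Complex.norm_exp_ofReal_mul_I, one_mul]

lemma fubini_int (φ φ₁ : SchwartzMap (EuclideanSpace ℝ (Fin d)) ℂ)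
    (F : EuclideanSpace ℝ (Fin d) × EuclideanSpace ℝ (Fin d) → ℂ) (hF : Integrable F)
    (x ξ : EuclideanSpace ℝ (Fin d)) :
    Integrable (fun q : EuclideanSpace ℝ (Fin d) ×
        (EuclideanSpace ℝ (Fin d) × EuclideanSpace ℝ (Fin d)) =>
      F q.2 * (Complex.exp ((⟪q.2.2, q.1⟫ : ℝ) * Complex.I) * φ (q.1 - q.2.1) *
      (starRingEnd ℂ) (φ₁ (q.1 - x)) * Complex.exp (-(⟪ξ, q.1⟫ : ℝ) * Complex.I)))
      (volume.prod volume) := by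
  have h1 : Integrable (fun y => (starRingEnd ℂ) (φ₁ (y - x))) :=
    (Complex.conjCLE.toContinuousLinearMap).integrable_comp (φ₁.integrable.comp_sub_right x)
  have h2 := h1.mul_prod hF
  obtain ⟨M, hM⟩ : ∃ M, ∀ y, ‖φ y‖ ≤ M :=
    ⟨_, fun y => φ.toBoundedContinuousFunction.norm_coe_le_norm y⟩
  have hc : Continuous (fun q : EuclideanSpace ℝ (Fin d) ×
        (EuclideanSpace ℝ (Fin d) × EuclideanSpace ℝ (Fin d)) =>
      Complex.exp ((⟪q.2.2, q.1⟫ : ℝ) * Complex.I) * φ (q.1 - q.2.1) *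
        Complex.exp (-(⟪ξ, q.1⟫ : ℝ) * Complex.I)) := by
    have h1 := φ.continuous
    fun_prop
  have h3 := h2.mul_bdd (c := M) hc.aestronglyMeasurable (Filter.Eventually.of_forall fun q => by
    rw [norm_mul, norm_mul, Complex.norm_exp_ofReal_mul_I, ← Complex.ofReal_neg,
      Complex.norm_exp_ofReal_mul_I, one_mul, mul_one]
    exact hM _)
  refine h3.congr (Filter.Eventually.of_forall fun q => ?_)
  simp only
  ring

lemma ptwise (φ φ₁ : SchwartzMap (EuclideanSpace ℝ (Fin d)) ℂ)
    (F : EuclideanSpace ℝ (Fin d) × EuclideanSpace ℝ (Fin d) → ℂ) (hF : Integrable F)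
    (w : EuclideanSpace ℝ (Fin d) × EuclideanSpace ℝ (Fin d)) :
    ‖STFT (⇑φ₁) (VStar (⇑φ) F) w.1 w.2‖ₑ ≤
      ENNReal.ofReal ((2 * Real.pi) ^ (-(d : ℝ) / 2)) *
        ∫⁻ z, ‖STFT (⇑φ₁) (⇑φ) (w - z).1 (w - z).2‖ₑ * ‖F z‖ₑ := by
  set c : ℝ := (2 * Real.pi) ^ (-(d : ℝ) / 2) with hc
  have hc0 : 0 ≤ c := by positivity
  have e : STFT (⇑φ₁) (VStar (⇑φ) F) w.1 w.2 = c * ∫ z, F z * (c *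
      ∫ y, Complex.exp ((⟪z.2, y⟫ : ℝ) * Complex.I) * φ (y - z.1) *
      (starRingEnd ℂ) (φ₁ (y - w.1)) * Complex.exp (-(⟪w.2, y⟫ : ℝ) * Complex.I)) := by
    unfold STFT VStar
    rw [← hc]
    congr 1
    have hs := integral_integral_swap (f := fun y z =>
      F z * (Complex.exp ((⟪z.2, y⟫ : ℝ) * Complex.I) * φ (y - z.1) *
      (starRingEnd ℂ) (φ₁ (y - w.1)) * Complex.exp (-(⟪w.2, y⟫ : ℝ) * Complex.I))) (fubini_int φ φ₁ F hF w.1 w.2)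
    calc _ = ∫ y, c * ∫ z, F z * (Complex.exp ((⟪z.2, y⟫ : ℝ) * Complex.I) * φ (y - z.1) *
          (starRingEnd ℂ) (φ₁ (y - w.1)) * Complex.exp (-(⟪w.2, y⟫ : ℝ) * Complex.I)) := by
          refine integral_congr_ae (Filter.Eventually.of_forall fun y => ?_)
          simp only
          rw [mul_assoc, mul_assoc, ← integral_mul_const]
          congr 1
          refine integral_congr_ae (Filter.Eventually.of_forall fun z => ?_)
          simp only
          ring
      _ = _ := by
          rw [integral_const_mul, hs, ← integral_const_mul]
          refine integral_congr_ae (Filter.Eventually.of_forall fun z => ?_)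
          simp only
          rw [integral_const_mul]
          ring
  rw [e, enorm_mul]
  have : ‖(c : ℂ)‖ₑ = ENNReal.ofReal c := by
    rw [← ofReal_norm, Complex.norm_real, Real.norm_of_nonneg hc0]
  rw [this]
  gcongr
  refine (enorm_integral_le_lintegral_enorm _).trans (lintegral_mono fun z => ?_)
  simp only
  rw [enorm_mul, mul_comm]
  gcongr
  rw [← ofReal_norm, ← ofReal_norm, inner_int φ φ₁ w.1 w.2 z.1 z.2]
  rfl

theorem stmt18 {d : ℕ} (s : ℝ) (hs : 1 < s) (p : ℝ≥0∞) (hp : 1 ≤ p)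
    (ω v : EuclideanSpace ℝ (Fin d) × EuclideanSpace ℝ (Fin d) → ℝ)
    (hωm : Measurable ω) (hω0 : ∀ z, 0 < ω z)
    (hvm : Measurable v) (hv0 : ∀ z, 0 < v z) (hveven : ∀ z, v (-z) = v z)
    (hvsub : ∀ z w, v (z + w) ≤ v z * v w)
    (C₀ k₀ C₁ : ℝ) (hC₀ : 0 < C₀) (hk₀ : 0 < k₀) (hC₁ : 0 < C₁)
    (hv : ∀ z, v z ≤ C₀ * Real.exp (k₀ * ‖z‖ ^ (1 / s)))
    (hmod : ∀ z w, ω (z + w) ≤ C₁ * v z * ω w)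
    (φ φ₁ : SchwartzMap (EuclideanSpace ℝ (Fin d)) ℂ)
    (F : EuclideanSpace ℝ (Fin d) × EuclideanSpace ℝ (Fin d) → ℂ) (hF : Integrable F)
    (hFω : eLpNorm (fun z => ‖F z‖ * ω z) p volume < ∞) :
    eLpNorm
        (fun z : EuclideanSpace ℝ (Fin d) × EuclideanSpace ℝ (Fin d) =>
          ‖STFT (⇑φ₁) (VStar (⇑φ) F) z.1 z.2‖ * ω z) p volume ≤
      ENNReal.ofReal ((2 * Real.pi) ^ (-(d : ℝ) / 2)) * ENNReal.ofReal C₁ *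
        eLpNorm
          (fun z : EuclideanSpace ℝ (Fin d) × EuclideanSpace ℝ (Fin d) =>
            ‖STFT (⇑φ₁) (⇑φ) z.1 z.2‖ * v z) 1 volume *
        eLpNorm (fun z => ‖F z‖ * ω z) p volume := by
  classical
  obtain ⟨F', hF'm, hFF'⟩ := hF.1
  have hm : Measurable (fun z => ‖F' z‖ₑ * ENNReal.ofReal (ω z)) :=
    hF'm.measurable.enorm.mul hωm.ennreal_ofReal
  have hgm : Measurable (fun z : EuclideanSpace ℝ (Fin d) × EuclideanSpace ℝ (Fin d) =>
      ‖STFT (⇑φ₁) (⇑φ) z.1 z.2‖ₑ * ENNReal.ofReal (v z)) :=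
    (stft_meas φ φ₁).measurable.enorm.mul hvm.ennreal_ofReal
  have hHaar : (volume : Measure (EuclideanSpace ℝ (Fin d) ×
      EuclideanSpace ℝ (Fin d))).IsAddHaarMeasure :=
    inferInstanceAs (Measure.IsAddHaarMeasure
      ((volume : Measure (EuclideanSpace ℝ (Fin d))).prod volume))
  have hNeg : (volume : Measure (EuclideanSpace ℝ (Fin d) ×
      EuclideanSpace ℝ (Fin d))).IsNegInvariant :=
    Measure.IsAddHaarMeasure.isNegInvariant_of_regular _
  have hY := young_s18 volume hgm hm hp
  have en : ∀ (a : ℂ) (b : ℝ), 0 < b → ‖‖a‖ * b‖ₑ = ‖a‖ₑ * ENNReal.ofReal b := by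
    intro a b hb
    rw [enorm_mul, enorm_norm, Real.enorm_of_nonneg hb.le]
  have h1 : eLpNorm (fun z => ‖F z‖ * ω z) p volume =
      eLpNorm (fun z => ‖F' z‖ₑ * ENNReal.ofReal (ω z)) p volume := by
    refine eLpNorm_congr_enorm_ae ?_
    filter_upwards [hFF'] with z hz
    rw [en _ _ (hω0 z), hz, enorm_eq_self]
  have h2 : eLpNorm (fun z : EuclideanSpace ℝ (Fin d) × EuclideanSpace ℝ (Fin d) =>
            ‖STFT (⇑φ₁) (⇑φ) z.1 z.2‖ * v z) 1 volume =
      ∫⁻ z : EuclideanSpace ℝ (Fin d) × EuclideanSpace ℝ (Fin d),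
        ‖STFT (⇑φ₁) (⇑φ) z.1 z.2‖ₑ * ENNReal.ofReal (v z) := by
    rw [eLpNorm_one_eq_lintegral_enorm]
    exact lintegral_congr fun z => en _ _ (hv0 z)
  rw [h1, h2, mul_assoc _ (lintegral _ _)]
  refine le_trans ?_ (mul_le_mul_right hY _)
  set c : ℝ := (2 * Real.pi) ^ (-(d : ℝ) / 2) with hc
  have hc0 : 0 ≤ c := by positivity
  have hlin : ENNReal.ofReal c * ENNReal.ofReal C₁ = ((c * C₁).toNNReal : ℝ≥0∞) := by
    rw [← ENNReal.ofReal_mul hc0]; rfl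
  rw [hlin, ← smul_eq_mul, ← ENNReal.smul_def]
  refine eLpNorm_le_nnreal_smul_eLpNorm_of_ae_le_mul' (Filter.Eventually.of_forall fun w => ?_) p
  rw [en _ _ (hω0 w), enorm_eq_self, ← hlin]
  have hmeas : Measurable (fun z : EuclideanSpace ℝ (Fin d) × EuclideanSpace ℝ (Fin d) =>
      ‖STFT (⇑φ₁) (⇑φ) (w - z).1 (w - z).2‖ₑ * ENNReal.ofReal (v (w - z)) *
        (‖F' z‖ₑ * ENNReal.ofReal (ω z))) :=
    (hgm.comp (measurable_const.sub measurable_id)).mul hm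
  rw [mul_assoc, ← lintegral_const_mul _ hmeas]
  refine (mul_le_mul_left (ptwise φ φ₁ F hF w) _).trans ?_
  rw [mul_assoc]
  gcongr
  rw [← lintegral_mul_const' _ _ ENNReal.ofReal_ne_top]
  refine lintegral_mono_ae ?_
  filter_upwards [hFF'] with z hz
  have hb : ENNReal.ofReal (ω w) ≤
      ENNReal.ofReal C₁ * ENNReal.ofReal (v (w - z)) * ENNReal.ofReal (ω z) := by
    rw [← ENNReal.ofReal_mul hC₁.le, ← ENNReal.ofReal_mul (mul_pos hC₁ (hv0 _)).le]
    refine ENNReal.ofReal_le_ofReal ?_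
    have := hmod (w - z) z
    rwa [sub_add_cancel] at this
  rw [hz]
  calc _ ≤ ‖STFT (⇑φ₁) (⇑φ) (w - z).1 (w - z).2‖ₑ * ‖F' z‖ₑ *
        (ENNReal.ofReal C₁ * ENNReal.ofReal (v (w - z)) * ENNReal.ofReal (ω z)) := by gcongr
    _ = _ := by ring

end Paper
end
end
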